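/- Let T be a computable real number with 0 < T < 1. Then the series Z(T) = ∑_{p ∈ dom U} 2^{−|p|/T}, W(1,T) = ∑_{p ∈ dom U} |p|·2^{−|p|/T}, and W(2,T) = ∑_{p ∈ dom U} |p|²·2^{−|p|/T} converge with Z(T) > 0; the specific heat C(T) = (ln 2 / T²)·( W(2,T)/Z(T) − (W(1,T)/Z(T))² ) is a left-computable real number which is Chaitin T-random and T-compressible; and the energy function x ↦ E(x) = W(1,x)/Z(x) on (0,1) is differentiable at T with derivative E'(T) = C(T). -/

import Mathlib

open Filter

/-- A set of finite binary strings is prefix-free if no element of it is a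
prefix of another (distinct) element of it. -/
def PrefixFree (S : Set (List Bool)) : Prop :=
  ∀ p ∈ S, ∀ q ∈ S, p <+: q → p = q

/-- A computer: a partial recursive function from finite binary strings to
finite binary strings whose domain is a prefix-free set. -/
structure Computer where
  f : List Bool →. List Bool
  partrec : Partrec f
  prefixFree : PrefixFree {p | (f p).Dom}

/-- The domain of a computer. -/
def Computer.domain (C : Computer) : Set (List Bool) := {p | (C.f p).Dom}

/-- A computer `U` is optimal if every computer can be simulated on `U` with
only a constant increase in program length. -/
def IsOptimal (U : Computer) : Prop :=
  ∀ C : Computer, ∃ d : ℕ, ∀ p : List Bool, (C.f p).Dom →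
    ∃ p' : List Bool, p'.length ≤ p.length + d ∧ ∀ s, s ∈ C.f p → s ∈ U.f p'

/-- Program-size complexity `H(s)`: the minimal length of a program `p`
with `U(p) = s`. -/
noncomputable def H (U : Computer) (s : List Bool) : ℕ :=
  sInf {n | ∃ p : List Bool, p.length = n ∧ s ∈ U.f p}

/-- The `n`-th bit (`n ≥ 1`) of the base-two expansion of `x mod 1`
(the expansion chosen with infinitely many zeros). -/
noncomputable def binDigit (x : ℝ) (n : ℕ) : Bool :=
  decide (⌊Int.fract x * 2 ^ n⌋ % 2 = 1)

/-- The first `n` bits of the base-two expansion of `x mod 1` (with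
infinitely many zeros). -/
noncomputable def bits (x : ℝ) (n : ℕ) : List Bool :=
  (List.range n).map fun i => binDigit x (i + 1)

/-- A real `x` is weakly Chaitin `D`-random (w.r.t. the computer `U`). -/
def WeaklyChaitinRandom (U : Computer) (D x : ℝ) : Prop :=
  ∃ c : ℝ, ∀ n : ℕ, 1 ≤ n → D * n - c ≤ (H U (bits x n) : ℝ)

/-- A real `x` is Chaitin `D`-random (w.r.t. the computer `U`). -/
def ChaitinRandom (U : Computer) (D x : ℝ) : Prop :=
  Tendsto (fun n : ℕ => (H U (bits x n) : ℝ) - D * n) atTop atTop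

/-- A real `x` is `D`-compressible (w.r.t. the computer `U`). -/
def DCompressible (U : Computer) (D x : ℝ) : Prop :=
  Filter.limsup (fun n : ℕ => (H U (bits x n) : ℝ) / n) atTop ≤ D

/-- A computable real number. -/
def ComputableReal (T : ℝ) : Prop :=
  ∃ f : ℕ → ℚ, Computable f ∧ ∀ n : ℕ, 1 ≤ n → |T - (f n : ℝ)| < 1 / n

/-- A right-computable real number. -/
def RightComputable (T : ℝ) : Prop :=
  ∃ g : ℕ → ℚ, Computable g ∧ (∀ n, T ≤ (g n : ℝ)) ∧
    Tendsto (fun n => ((g n : ℚ) : ℝ)) atTop (nhds T)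

/-- A left-computable real number. -/
def LeftComputable (T : ℝ) : Prop := RightComputable (-T)

/-- The term `2 ^ (-|p| / T)` of the partition function `Z(T)`. -/
noncomputable def zterm (U : Computer) (T : ℝ) (p : U.domain) : ℝ :=
  (2 : ℝ) ^ (-((p : List Bool).length : ℝ) / T)

/-- The term `|p| ^ Q * 2 ^ (-|p| / T)` of `W(Q,T)`. -/
noncomputable def wterm (U : Computer) (Q T : ℝ) (p : U.domain) : ℝ :=
  ((p : List Bool).length : ℝ) ^ Q * (2 : ℝ) ^ (-((p : List Bool).length : ℝ) / T)

/-- The term `|p| * 2 ^ (-|p| / T)` of `W(1,T)`. -/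
noncomputable def wlterm (U : Computer) (T : ℝ) (p : U.domain) : ℝ :=
  ((p : List Bool).length : ℝ) * (2 : ℝ) ^ (-((p : List Bool).length : ℝ) / T)

/-- The term `|p| ^ 2 * 2 ^ (-|p| / T)` of `W(2,T)`. -/
noncomputable def wsqterm (U : Computer) (T : ℝ) (p : U.domain) : ℝ :=
  ((p : List Bool).length : ℝ) ^ 2 * (2 : ℝ) ^ (-((p : List Bool).length : ℝ) / T)

/-- A lower-computable function `f : ℕ⁺ → [0,∞)` (represented on `ℕ`,
with all conditions imposed on positive arguments). -/
def LowerComputableFun (f : ℕ → ℝ) : Prop :=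
  ∃ a : ℕ → ℕ → ℚ, Computable₂ a ∧
    (∀ k n : ℕ, 1 ≤ k → 1 ≤ n → (a k n : ℝ) ≤ f n) ∧
    (∀ n : ℕ, 1 ≤ n → Tendsto (fun k => ((a k n : ℚ) : ℝ)) atTop (nhds (f n)))

/-- A lower-computable semi-measure on finite binary strings. -/
def LowerComputableSemiMeasure (r : List Bool → ℝ) : Prop :=
  (∀ s, 0 ≤ r s) ∧ (∀ s, r s ≤ 1) ∧ Summable r ∧ (∑' s, r s) ≤ 1 ∧
    ∃ f : ℕ → List Bool → ℚ, Computable₂ f ∧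
      (∀ n s, ((f n s : ℚ) : ℝ) ≤ r s) ∧
      (∀ s, Tendsto (fun n => ((f n s : ℚ) : ℝ)) atTop (nhds (r s)))

/-- A universal probability. -/
def UniversalProbability (m : List Bool → ℝ) : Prop :=
  LowerComputableSemiMeasure m ∧
    ∀ r : List Bool → ℝ, LowerComputableSemiMeasure r →
      ∃ c : ℝ, 0 < c ∧ ∀ s, c * r s ≤ m s

/-!
Enumerate the programs of `U` as `p₀, p₁, …` with lengths `ℓₖ`, and put `q = 2^(-1/T)`. Up to the
positive computable factor `ln 2 / T²`, the specific heat is the variance of the program length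
under the Gibbs weights `q^ℓₖ`. At a late stage, a further program `pₖ` raises the variance by an
amount comparable to `ℓₖ² q^ℓₖ`; so the variances of `p₀, …, pₖ₋₁` are computable, eventually
increase with `k`, and have errors comparable to the tails of `∑ ℓᵢ² q^ℓᵢ`.

* Randomness: `n` bits of the specific heat locate a stage with error `O(2⁻ⁿ)`. The shortest program
  for an output not produced before that stage appears later, so that its length `L` satisfies
  `L² q^L = O(2⁻ⁿ)`. The factor `L²` is what makes `L - T n` tend to infinity.
* Compressibility: for rational `s` slightly larger than `T`, the first `s n` bits of `∑ 2^(-ℓᵢ)`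
  locate a stage after which only programs of length at least `s n` appear, and whose error is
  therefore `O(2⁻ⁿ)`.

The derivative of the energy comes from termwise differentiation of the moments.
-/

section Computability

attribute [fun_prop] Computable Computable.id Computable.const Computable.comp Computable.fst
  Computable.snd Computable.pair Computable.cond Computable.unpair

variable {α β : Type*} [Primcodable α] [Primcodable β]

section Naturals

variable {f g : α → ℕ}

@[fun_prop]
theorem computable_nat_add (hf : Computable f) (hg : Computable g) :
    Computable fun a => f a + g a :=
  Primrec.nat_add.to_comp.comp hf hg

@[fun_prop]
theorem computable_nat_sub (hf : Computable f) (hg : Computable g) :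
    Computable fun a => f a - g a :=
  Primrec.nat_sub.to_comp.comp hf hg

@[fun_prop]
theorem computable_nat_mul (hf : Computable f) (hg : Computable g) :
    Computable fun a => f a * g a :=
  Primrec.nat_mul.to_comp.comp hf hg

@[fun_prop]
theorem computable_nat_div (hf : Computable f) (hg : Computable g) :
    Computable fun a => f a / g a :=
  Primrec.nat_div.to_comp.comp hf hg

@[fun_prop]
theorem computable_nat_mod (hf : Computable f) (hg : Computable g) :
    Computable fun a => f a % g a :=
  Primrec.nat_mod.to_comp.comp hf hg

@[fun_prop]
theorem computable_nat_pow (hf : Computable f) (hg : Computable g) :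
    Computable fun a => f a ^ g a :=
  (Primrec₂.unpaired'.1 Nat.Primrec.pow).to_comp.comp hf hg

@[fun_prop]
theorem computable_nat_le (hf : Computable f) (hg : Computable g) :
    Computable fun a => decide (f a ≤ g a) :=
  Primrec.nat_le.decide.to_comp.comp hf hg

end Naturals

@[fun_prop]
theorem computable_decide_eq [DecidableEq β] {f g : α → β} (hf : Computable f)
    (hg : Computable g) : Computable fun a => decide (f a = g a) :=
  Primrec.eq.decide.to_comp.comp hf hg

@[fun_prop]
theorem computable_bool_and {f g : α → Bool} (hf : Computable f) (hg : Computable g) :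
    Computable fun a => f a && g a :=
  Primrec.and.to_comp.comp hf hg

@[fun_prop]
theorem computable_bool_not {f : α → Bool} (hf : Computable f) : Computable fun a => !f a :=
  Primrec.not.to_comp.comp hf

@[fun_prop]
theorem computable_length {f : α → List β} (hf : Computable f) :
    Computable fun a => (f a).length :=
  Computable.list_length.comp hf

theorem computable_nat_rec {f : α → ℕ} {g : α → β} {h : α → ℕ → β → β} (hf : Computable f)
    (hg : Computable g) (hh : Computable fun p : α × ℕ × β => h p.1 p.2.1 p.2.2) :
    Computable fun a => Nat.rec (motive := fun _ => β) (g a) (h a) (f a) :=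
  Computable.nat_rec (h := fun a p => h a p.1 p.2) hf hg hh

theorem computable_find {P : α → ℕ → Bool} (hP : Computable fun p : α × ℕ => P p.1 p.2)
    (hex : ∀ a, ∃ n, P a n) : Computable fun a => Nat.find (hex a) :=
  Computable.find (P := fun a n => (P a n : Prop))
    (Computable.computablePred (hP.of_eq fun p => by simp)) hex

theorem partrec_rfind_map {σ : Type*} [Primcodable σ] {P : α → ℕ → Bool} {G : α → ℕ → σ}
    (hP : Computable fun p : α × ℕ => P p.1 p.2) (hG : Computable fun p : α × ℕ => G p.1 p.2) :
    Partrec fun a => (Nat.rfind fun n => Part.some (P a n)).map (G a) :=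
  (Partrec.rfind (p := fun a n => Part.some (P a n)) hP.partrec).map hG

theorem computable_of_decidable_graph [DecidableEq β] {f : α → β}
    (hf : Computable fun p : α × β => decide (f p.1 = p.2)) : Computable f := by
  let P (a : α) (n : ℕ) : Bool :=
    ((Encodable.decode (α := β) n).map fun b => decide (f a = b)).getD false
  have hgraph : Computable₂ fun (p : α × ℕ) (b : β) => decide (f p.1 = b) :=
    hf.comp (g := fun p : (α × ℕ) × β => (p.1.1, p.2)) (by fun_prop)
  have hP : Computable fun p : α × ℕ => P p.1 p.2 :=
    Computable.option_getD
      (Computable.option_map (Computable.decode.comp Computable.snd) hgraph)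
      (Computable.const false)
  have hex (a : α) : ∃ n, P a n := ⟨Encodable.encode (f a), by simp [P]⟩
  have hfind := Computable.decode (α := β).comp (computable_find hP hex)
  refine Computable.option_some_iff.1 (hfind.of_eq fun a => ?_)
  have hspec := Nat.find_spec (hex a)
  cases hd : Encodable.decode (α := β) (Nat.find (hex a)) <;> simp_all [P]

theorem computable_subtype_ofNat {S : Set ℕ} [DecidablePred (· ∈ S)] [Infinite S]
    (hS : Computable fun n => decide (n ∈ S)) :
    Computable fun n => (Nat.Subtype.ofNat S n : ℕ) := by
  -- Searching above an arbitrary `x`, not only above an element of `S`, keeps the search total.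
  have hex (x : ℕ) : ∃ m, decide (x + m + 1 ∈ S) := by
    obtain ⟨y, hy, hxy⟩ := (Set.infinite_coe_iff.1 ‹Infinite S›).exists_gt x
    exact ⟨y - x - 1, by simpa [show x + (y - x - 1) + 1 = y by omega] using hy⟩
  have hnext : Computable fun x => x + Nat.find (hex x) + 1 := by
    have := computable_find (P := fun x m => decide (x + m + 1 ∈ S))
      (hS.comp (g := fun p : ℕ × ℕ => p.1 + p.2 + 1) (by fun_prop)) hex
    fun_prop
  refine (computable_nat_rec (h := fun _ _ x => x + Nat.find (hex x) + 1) Computable.id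
    (Computable.const (Nat.Subtype.ofNat S 0 : ℕ))
    (hnext.comp (Computable.snd.comp Computable.snd))).of_eq fun n => ?_
  induction n with
  | zero => rfl
  | succ n ih =>
    simp only [id] at ih ⊢
    rw [ih]
    simp only [Nat.Subtype.ofNat, Nat.Subtype.succ, decide_eq_true_eq]

theorem computable_sum_range {M : Type*} [AddCommMonoid M] [Primcodable M]
    (hadd : Computable fun p : M × M => p.1 + p.2) {f : α → ℕ → M} {g : α → ℕ}
    (hf : Computable fun p : α × ℕ => f p.1 p.2) (hg : Computable g) :
    Computable fun a => ∑ i ∈ Finset.range (g a), f a i := by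
  refine (computable_nat_rec (h := fun a i b => b + f a i) hg (Computable.const 0)
    (hadd.comp (g := fun p : α × ℕ × M => (p.2.2, f p.1 p.2.1)) ?_)).of_eq fun a => ?_
  · fun_prop
  · induction g a with
    | zero => rfl
    | succ n ih => simp only [ih, Finset.sum_range_succ]

end Computability

-- Otherwise unification inside `fun_prop` unfolds `Computable` and does not terminate in practice.
attribute [local irreducible] Computable

section Rationals

/-- The injective, non-surjective coding of rationals by numerator and denominator. The default
`Denumerable ℚ` structure codes `q` by the rank of `ratCode q` in `Set.range ratCode`, and the
computability of arithmetic on `ℚ` is reduced to that of `ratCode`. -/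
def ratCode (q : ℚ) : ℕ := Nat.pair (Equiv.intEquivNat q.num) q.den

theorem ratCode_eq_encode : ratCode = @Encodable.encode ℚ Rat.instEncodable := rfl

theorem intEquivNat_eq_toNat (z : ℤ) :
    Equiv.intEquivNat z = 2 * z.toNat + (2 * (-z).toNat - 1) := by
  cases z with
  | ofNat n =>
    change Nat.bit false n = _
    simp [Nat.bit]
  | negSucc n =>
    change Nat.bit true n = _
    simp [Nat.bit]
    omega

theorem mem_range_ratCode {x : ℕ} : x ∈ Set.range ratCode ↔
    0 < x.unpair.2 ∧ ((x.unpair.1 + 1) / 2).Coprime x.unpair.2 := by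
  have hnatAbs (z : ℤ) : (Equiv.intEquivNat z + 1) / 2 = z.natAbs := by
    rw [intEquivNat_eq_toNat]
    omega
  constructor
  · rintro ⟨q, rfl⟩
    simpa [ratCode, hnatAbs] using ⟨q.den_pos, q.reduced⟩
  · rintro ⟨hden, hcop⟩
    refine ⟨⟨Equiv.intEquivNat.symm x.unpair.1, x.unpair.2, hden.ne', ?_⟩, by simp [ratCode]⟩
    simpa [← hnatAbs] using hcop

theorem coprime_iff_forall_lt (a b : ℕ) :
    a.Coprime b ↔ ∀ e < a + b + 1, ¬(e ≠ 1 ∧ a % e = 0 ∧ b % e = 0) := by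
  refine ⟨fun h e _ ⟨he, ha, hb⟩ => he ?_, fun h => ?_⟩
  · exact Nat.eq_one_of_dvd_coprimes h (Nat.dvd_of_mod_eq_zero ha) (Nat.dvd_of_mod_eq_zero hb)
  · have hgcd : a.gcd b ≤ a + b := by
      rcases Nat.eq_zero_or_pos a with rfl | ha
      · simp
      · exact (Nat.gcd_le_left b ha).trans (Nat.le_add_right a b)
    by_contra hne
    exact h _ (Nat.lt_succ_of_le hgcd) ⟨hne, Nat.mod_eq_zero_of_dvd (Nat.gcd_dvd_left a b),
      Nat.mod_eq_zero_of_dvd (Nat.gcd_dvd_right a b)⟩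

theorem computable_coprime : Computable fun x : ℕ × ℕ => decide (x.1.Coprime x.2) := by
  let R (e : ℕ) (x : ℕ × ℕ) : Prop := ¬(e ≠ 1 ∧ x.1 % e = 0 ∧ x.2 % e = 0)
  have hR : PrimrecRel R :=
    .not (.and (.not (Primrec.eq.comp .fst (.const 1)))
      (.and (Primrec.eq.comp (Primrec.nat_mod.comp (Primrec.fst.comp .snd) .fst) (.const 0))
        (Primrec.eq.comp (Primrec.nat_mod.comp (Primrec.snd.comp .snd) .fst) (.const 0))))
  have hall : PrimrecPred fun x : ℕ × ℕ => ∀ e ∈ List.range (x.1 + x.2 + 1), R e x :=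
    hR.forall_mem_list.comp
      (Primrec.list_range.comp (Primrec.succ.comp (Primrec.nat_add.comp .fst .snd))) Primrec.id
  exact hall.decide.to_comp.of_eq fun x => decide_eq_decide.2 <| by
    simp only [List.mem_range, coprime_iff_forall_lt, R]

theorem computable_ratCode : Computable ratCode := by
  let _ := @Encodable.decidableRangeEncode ℚ Rat.instEncodable
  let _ : Infinite (Set.range (@Encodable.encode ℚ Rat.instEncodable)) :=
    Infinite.of_injective _
      (Equiv.ofInjective _ (@Encodable.encode_injective ℚ Rat.instEncodable)).injective
  have hrange : Computable fun x =>
      decide (x ∈ Set.range (@Encodable.encode ℚ Rat.instEncodable)) := by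
    have hunpair : Computable fun x : ℕ => ((x.unpair.1 + 1) / 2, x.unpair.2) := by fun_prop
    have : Computable fun x : ℕ =>
        decide (0 < x.unpair.2) && decide (((x.unpair.1 + 1) / 2).Coprime x.unpair.2) :=
      computable_bool_and (by fun_prop) (computable_coprime.comp hunpair)
    refine this.of_eq fun x => ?_
    rw [← Bool.decide_and, decide_eq_decide, ← ratCode_eq_encode, mem_range_ratCode]
  have hofNat (n : ℕ) : Denumerable.ofNat ℚ n =
      (@Encodable.equivRangeEncode ℚ Rat.instEncodable).symm (Nat.Subtype.ofNat _ n) :=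
    Denumerable.ofNat_of_decode rfl
  refine ((computable_subtype_ofNat hrange).comp Computable.encode).of_eq fun q => ?_
  have hq := (hofNat _).symm.trans (Denumerable.ofNat_encode q)
  exact congrArg Subtype.val
    ((Equiv.symm_apply_eq (@Encodable.equivRangeEncode ℚ Rat.instEncodable)).1 hq)

variable {α : Type*} [Primcodable α]

@[fun_prop]
theorem computable_rat_num {f : α → ℚ} (hf : Computable f) : Computable fun a => (f a).num := by
  refine Computable.comp (f := Rat.num) (Computable.encode_iff.1 ?_) hf
  exact ((Computable.fst.comp Computable.unpair).comp computable_ratCode).of_eq fun q =>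
    congrArg Prod.fst (Nat.unpair_pair _ _)

@[fun_prop]
theorem computable_rat_den {f : α → ℚ} (hf : Computable f) : Computable fun a => (f a).den :=
  ((Computable.snd.comp Computable.unpair).comp (computable_ratCode.comp hf)).of_eq fun _ =>
    congrArg Prod.snd (Nat.unpair_pair _ _)

@[fun_prop]
theorem computable_int_toNat {f : α → ℤ} (hf : Computable f) : Computable fun a => (f a).toNat := by
  have hcode : Computable fun z : ℤ => Equiv.intEquivNat z := Computable.encode
  have : Computable fun z : ℤ => bif decide (Equiv.intEquivNat z % 2 = 0)
      then Equiv.intEquivNat z / 2 else 0 := by fun_prop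
  refine (this.comp hf).of_eq fun a => ?_
  rw [Bool.cond_decide, intEquivNat_eq_toNat]
  split_ifs <;> omega

@[fun_prop]
theorem computable_int_neg {f : α → ℤ} (hf : Computable f) : Computable fun a => -f a := by
  have hcode : Computable fun z : ℤ => Equiv.intEquivNat z := Computable.encode
  refine Computable.comp (f := fun z : ℤ => -z) (Computable.encode_iff.1 ?_) hf
  have : Computable fun z : ℤ => 2 * ((Equiv.intEquivNat z + 1) / 2 - z.toNat) +
      (2 * z.toNat - 1) := by fun_prop
  refine this.of_eq fun z => ?_
  change _ = Equiv.intEquivNat (-z)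
  rw [intEquivNat_eq_toNat, intEquivNat_eq_toNat]
  omega

theorem rat_eq_toNat_sub_toNat_div (q : ℚ) :
    q = ((q.num.toNat : ℚ) - (-q.num).toNat) / q.den := by
  have hnum : (q.num : ℚ) = (q.num.toNat : ℚ) - (-q.num).toNat := by
    have : q.num = (q.num.toNat : ℤ) - (-q.num).toNat := by omega
    exact_mod_cast congrArg (Int.cast (R := ℚ)) this
  rw [← hnum, Rat.num_div_den]

theorem computable_rat_of_eq_div {q : α → ℚ} {f g h : α → ℕ} (hf : Computable f)
    (hg : Computable g) (hh : Computable h) (hpos : ∀ a, 0 < h a)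
    (hq : ∀ a, q a = ((f a : ℚ) - g a) / h a) : Computable q := by
  have hgraph : Computable fun p : α × ℚ => decide
      (f p.1 * p.2.den + (-p.2.num).toNat * h p.1 = g p.1 * p.2.den + p.2.num.toNat * h p.1) := by
    fun_prop
  refine computable_of_decidable_graph (hgraph.of_eq fun ⟨a, r⟩ => decide_eq_decide.2 ?_)
  have hh0 : (h a : ℚ) ≠ 0 := Nat.cast_ne_zero.2 (hpos a).ne'
  have hr0 : (r.den : ℚ) ≠ 0 := Nat.cast_ne_zero.2 r.den_ne_zero
  rw [hq, ← Nat.cast_inj (R := ℚ)]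
  conv_rhs => rw [rat_eq_toNat_sub_toNat_div r, div_eq_div_iff hh0 hr0]
  push_cast
  constructor <;> intro heq <;> linarith

@[fun_prop]
theorem computable_rat_natCast {f : α → ℕ} (hf : Computable f) :
    Computable fun a => (f a : ℚ) :=
  computable_rat_of_eq_div hf (Computable.const 0) (Computable.const 1) (fun _ => one_pos)
    fun a => by simp

section Arithmetic

variable {f g : α → ℚ}

@[fun_prop]
theorem computable_rat_add (hf : Computable f) (hg : Computable g) :
    Computable fun a => f a + g a := by
  refine computable_rat_of_eq_div
    (f := fun a => (f a).num.toNat * (g a).den + (g a).num.toNat * (f a).den)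
    (g := fun a => (-(f a).num).toNat * (g a).den + (-(g a).num).toNat * (f a).den)
    (h := fun a => (f a).den * (g a).den) (by fun_prop) (by fun_prop) (by fun_prop)
    (fun a => Nat.mul_pos (f a).den_pos (g a).den_pos) fun a => ?_
  have := (f a).den_ne_zero
  have := (g a).den_ne_zero
  conv_lhs => rw [rat_eq_toNat_sub_toNat_div (f a), rat_eq_toNat_sub_toNat_div (g a)]
  push_cast
  field_simp
  ring

@[fun_prop]
theorem computable_rat_mul (hf : Computable f) (hg : Computable g) :
    Computable fun a => f a * g a := by
  refine computable_rat_of_eq_div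
    (f := fun a => (f a).num.toNat * (g a).num.toNat + (-(f a).num).toNat * (-(g a).num).toNat)
    (g := fun a => (f a).num.toNat * (-(g a).num).toNat + (-(f a).num).toNat * (g a).num.toNat)
    (h := fun a => (f a).den * (g a).den) (by fun_prop) (by fun_prop) (by fun_prop)
    (fun a => Nat.mul_pos (f a).den_pos (g a).den_pos) fun a => ?_
  have := (f a).den_ne_zero
  have := (g a).den_ne_zero
  conv_lhs => rw [rat_eq_toNat_sub_toNat_div (f a), rat_eq_toNat_sub_toNat_div (g a)]
  push_cast
  field_simp
  ring

@[fun_prop]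
theorem computable_rat_neg (hf : Computable f) : Computable fun a => -f a := by
  have : Computable fun a => -1 * f a := by fun_prop
  exact this.of_eq fun a => neg_one_mul _

@[fun_prop]
theorem computable_rat_sub (hf : Computable f) (hg : Computable g) :
    Computable fun a => f a - g a := by
  simp only [sub_eq_add_neg]
  fun_prop

@[fun_prop]
theorem computable_rat_le (hf : Computable f) (hg : Computable g) :
    Computable fun a => decide (f a ≤ g a) := by
  have : Computable fun a => decide ((-(g a - f a).num).toNat ≤ 0) := by fun_prop
  refine this.of_eq fun a => decide_eq_decide.2 ?_
  rw [← sub_nonneg (a := g a), ← Rat.num_nonneg]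
  omega

@[fun_prop]
theorem computable_rat_inv (hf : Computable f) : Computable fun a => (f a)⁻¹ := by
  have hgraph : Computable fun p : α × ℚ =>
      decide (f p.1 * p.2 * f p.1 = f p.1) && decide (p.2 * f p.1 * p.2 = p.2) := by fun_prop
  refine computable_of_decidable_graph (hgraph.of_eq fun ⟨a, r⟩ => ?_)
  rw [← Bool.decide_and, decide_eq_decide]
  rcases eq_or_ne (f a) 0 with h0 | h0
  · simp [h0, eq_comm]
  · refine ⟨fun ⟨h, _⟩ => ?_, fun h => ?_⟩
    · exact inv_eq_of_mul_eq_one_right (mul_right_cancel₀ h0 (h.trans (one_mul _).symm))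
    · have hr : (f a)⁻¹ = r := h
      simp [← hr, h0]

@[fun_prop]
theorem computable_rat_div (hf : Computable f) (hg : Computable g) :
    Computable fun a => f a / g a := by
  simp only [div_eq_mul_inv]
  fun_prop

@[fun_prop]
theorem computable_rat_abs (hf : Computable f) : Computable fun a => |f a| := by
  have : Computable fun a => bif decide (0 ≤ f a) then f a else -f a := by fun_prop
  refine this.of_eq fun a => ?_
  rw [Bool.cond_decide]
  split_ifs with h
  · exact (abs_of_nonneg h).symm
  · exact (abs_of_neg (not_le.1 h)).symm

@[fun_prop]
theorem computable_rat_pow {k : α → ℕ} (hf : Computable f) (hk : Computable k) :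
    Computable fun a => f a ^ k a := by
  refine (computable_nat_rec (h := fun a _ b => b * f a) hk (Computable.const 1)
    (by fun_prop)).of_eq fun a => ?_
  induction k a with
  | zero => simp
  | succ n ih => simp only [ih, pow_succ]

@[fun_prop]
theorem computable_rat_floor (hf : Computable f) : Computable fun a => ⌊f a⌋₊ := by
  have : Computable fun a => (f a).num.toNat / (f a).den := by fun_prop
  refine this.of_eq fun a => ?_
  conv_rhs => rw [← Rat.num_div_den (f a), Nat.floor_div_natCast, ← Int.floor_toNat,
    Int.floor_intCast]

theorem computable_rat_sum_range {f : α → ℕ → ℚ} {k : α → ℕ}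
    (hf : Computable fun p : α × ℕ => f p.1 p.2) (hk : Computable k) :
    Computable fun a => ∑ i ∈ Finset.range (k a), f a i :=
  computable_sum_range (by fun_prop) hf hk

end Arithmetic

end Rationals

section ComputableFamily

open Topology

variable {α β : Type*} [Primcodable α] [Primcodable β]

/-- A family of reals is computable if its members can be approximated by rationals, uniformly
and with an error at most `2⁻ⁿ` (a computable sequence of reals in the sense of computable
analysis, when `α = ℕ`). -/
def ComputableFamily (x : α → ℝ) : Prop :=
  ∃ f : α × ℕ → ℚ, Computable f ∧ ∀ a n, |x a - f (a, n)| ≤ (1 / 2) ^ n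

theorem tendsto_half_pow : Tendsto (fun n : ℕ => (1 / 2 : ℝ) ^ n) atTop (𝓝 0) :=
  tendsto_pow_atTop_nhds_zero_of_lt_one (by norm_num) (by norm_num)

theorem tendsto_of_abs_sub_le_half_pow {x : ℝ} {f : ℕ → ℝ} (hf : ∀ n, |x - f n| ≤ (1 / 2) ^ n) :
    Tendsto f atTop (𝓝 x) :=
  tendsto_iff_dist_tendsto_zero.2 <| squeeze_zero (fun _ => dist_nonneg)
    (fun n => by rw [dist_comm]; exact hf n) tendsto_half_pow

theorem computableFamily_ratCast {f : α → ℚ} (hf : Computable f) :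
    ComputableFamily fun a => (f a : ℝ) :=
  ⟨fun p => f p.1, by fun_prop, fun a n => by simp⟩

theorem abs_inv_sub_inv_le_of_approx {x u v : ℝ} {m n : ℕ} (hu : 2 * (1 / 2) ^ m ≤ |u|)
    (hxu : |x - u| ≤ (1 / 2) ^ m) (hxv : |x - v| ≤ (1 / 2) ^ (n + 2 * m + 1)) :
    |x⁻¹ - v⁻¹| ≤ (1 / 2) ^ n := by
  have hδ : (0 : ℝ) < (1 / 2) ^ m := by positivity
  have hx : (1 / 2) ^ m ≤ |x| := by
    linarith [abs_sub_abs_le_abs_sub u x, abs_sub_comm x u]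
  have hmul : (1 / 2 : ℝ) ^ (n + 2 * m + 1) = (1 / 2) ^ n * ((1 / 2) ^ m * ((1 / 2) ^ m / 2)) := by
    ring
  have hv : (1 / 2) ^ m / 2 ≤ |v| := by
    have hsmall : (1 / 2 : ℝ) ^ (n + 2 * m + 1) ≤ (1 / 2) ^ (m + 1) :=
      pow_le_pow_of_le_one (by norm_num) (by norm_num) (by omega)
    have hhalf : (1 / 2 : ℝ) ^ (m + 1) = (1 / 2) ^ m / 2 := by ring
    linarith [abs_sub_abs_le_abs_sub x v]
  have hx0 : x ≠ 0 := abs_pos.1 (hδ.trans_le hx)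
  have hv0 : v ≠ 0 := abs_pos.1 ((half_pos hδ).trans_le hv)
  rw [inv_sub_inv hx0 hv0, abs_div, abs_mul, abs_sub_comm, div_le_iff₀ (by positivity)]
  calc |x - v| ≤ (1 / 2) ^ n * ((1 / 2) ^ m * ((1 / 2) ^ m / 2)) := hmul ▸ hxv
    _ ≤ (1 / 2) ^ n * (|x| * |v|) := by gcongr

namespace ComputableFamily

variable {x y : α → ℝ}

theorem comp (hx : ComputableFamily x) {g : β → α} (hg : Computable g) :
    ComputableFamily fun b => x (g b) := by
  obtain ⟨f, hf, hxf⟩ := hx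
  exact ⟨fun p => f (g p.1, p.2), by fun_prop, fun b n => hxf (g b) n⟩

theorem of_tendsto_zero {z : α × ℕ → ℝ} (hz : ComputableFamily z) {e : α × ℕ → ℚ}
    (he : Computable e) (hze : ∀ a k, |x a - z (a, k)| ≤ e (a, k))
    (he0 : ∀ a, Tendsto (fun k => (e (a, k) : ℝ)) atTop (𝓝 0)) : ComputableFamily x := by
  obtain ⟨f, hf, hzf⟩ := hz
  have hex (p : α × ℕ) : ∃ k, decide (e (p.1, k) ≤ (1 / 2) ^ (p.2 + 1)) := by
    obtain ⟨k, hk⟩ := ((he0 p.1).eventually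
      (gt_mem_nhds (show (0 : ℝ) < (1 / 2) ^ (p.2 + 1) by positivity))).exists
    have hk' : (e (p.1, k) : ℝ) ≤ ((1 / 2) ^ (p.2 + 1) : ℚ) := by
      push_cast
      exact hk.le
    exact ⟨k, decide_eq_true (Rat.cast_le.1 hk')⟩
  have hk := computable_find (P := fun (p : α × ℕ) k => decide (e (p.1, k) ≤ (1 / 2) ^ (p.2 + 1)))
    (by fun_prop) hex
  refine ⟨fun p => f ((p.1, Nat.find (hex p)), p.2 + 1), hf.comp (by fun_prop), fun a n => ?_⟩
  set k := Nat.find (hex (a, n))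
  have hek : (e (a, k) : ℝ) ≤ (1 / 2) ^ (n + 1) := by
    have := Rat.cast_le (K := ℝ).2 (of_decide_eq_true (Nat.find_spec (hex (a, n))))
    push_cast at this
    exact this
  calc |x a - f ((a, k), n + 1)|
      ≤ |x a - z (a, k)| + |z (a, k) - f ((a, k), n + 1)| := abs_sub_le _ _ _
    _ ≤ (1 / 2) ^ (n + 1) + (1 / 2) ^ (n + 1) :=
        add_le_add ((hze a k).trans hek) (hzf (a, k) (n + 1))
    _ = (1 / 2) ^ n := by ring

theorem neg (hx : ComputableFamily x) : ComputableFamily fun a => -x a := by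
  obtain ⟨f, hf, hxf⟩ := hx
  refine ⟨fun p => -f p, by fun_prop, fun a n => ?_⟩
  rw [← abs_neg]
  simpa [add_comm, sub_eq_add_neg] using hxf a n

theorem sum_range {x : α × ℕ → ℝ} (hx : ComputableFamily x) {k : α → ℕ} (hk : Computable k) :
    ComputableFamily fun a => ∑ i ∈ Finset.range (k a), x (a, i) := by
  obtain ⟨f, hf, hxf⟩ := hx
  refine of_tendsto_zero (e := fun p => k p.1 * (1 / 2) ^ p.2) (computableFamily_ratCast
    (computable_rat_sum_range (f := fun p i => f ((p.1, i), p.2)) (k := fun p => k p.1)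
      (by fun_prop) (by fun_prop))) (by fun_prop) (fun a n => ?_) fun a => ?_
  · push_cast
    rw [← Finset.sum_sub_distrib]
    calc |∑ i ∈ Finset.range (k a), (x (a, i) - f ((a, i), n))|
        ≤ ∑ _i ∈ Finset.range (k a), (1 / 2 : ℝ) ^ n :=
          (Finset.abs_sum_le_sum_abs _ _).trans (Finset.sum_le_sum fun i _ => hxf (a, i) n)
      _ = k a * (1 / 2) ^ n := by simp
  · push_cast
    simpa using tendsto_half_pow.const_mul (k a : ℝ)

theorem mul (hx : ComputableFamily x) (hy : ComputableFamily y) :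
    ComputableFamily fun a => x a * y a := by
  obtain ⟨f, hf, hxf⟩ := hx
  obtain ⟨g, hg, hyg⟩ := hy
  refine of_tendsto_zero (computableFamily_ratCast (f := fun p => f p * g p) (by fun_prop))
    (e := fun p => (1 / 2) ^ p.2 * (|g p| + (1 / 2) ^ p.2) + |f p| * (1 / 2) ^ p.2) (by fun_prop)
    (fun a n => ?_) fun a => ?_
  · have hy_le : |y a| ≤ |(g (a, n) : ℝ)| + (1 / 2) ^ n := by
      linarith [abs_sub_abs_le_abs_sub (y a) (g (a, n)), hyg a n]
    push_cast
    calc |x a * y a - f (a, n) * g (a, n)|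
        = |(x a - f (a, n)) * y a + f (a, n) * (y a - g (a, n))| := by ring_nf
      _ ≤ |x a - f (a, n)| * |y a| + |(f (a, n) : ℝ)| * |y a - g (a, n)| := by
          rw [← abs_mul, ← abs_mul]
          exact abs_add_le _ _
      _ ≤ _ := by
          gcongr
          · exact hxf a n
          · exact hyg a n
  · push_cast
    have hf_lim := (tendsto_of_abs_sub_le_half_pow (hxf a)).abs
    have hg_lim := (tendsto_of_abs_sub_le_half_pow (hyg a)).abs
    simpa using (tendsto_half_pow.mul (hg_lim.add tendsto_half_pow)).add
      (hf_lim.mul tendsto_half_pow)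

theorem add (hx : ComputableFamily x) (hy : ComputableFamily y) :
    ComputableFamily fun a => x a + y a := by
  obtain ⟨f, hf, hxf⟩ := hx
  obtain ⟨g, hg, hyg⟩ := hy
  refine ⟨fun p => f (p.1, p.2 + 1) + g (p.1, p.2 + 1), by fun_prop, fun a n => ?_⟩
  push_cast
  calc |x a + y a - (f (a, n + 1) + g (a, n + 1))|
      = |(x a - f (a, n + 1)) + (y a - g (a, n + 1))| := by ring_nf
    _ ≤ (1 / 2) ^ (n + 1) + (1 / 2) ^ (n + 1) :=
        (abs_add_le _ _).trans (add_le_add (hxf a _) (hyg a _))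
    _ = (1 / 2) ^ n := by ring

theorem sub (hx : ComputableFamily x) (hy : ComputableFamily y) :
    ComputableFamily fun a => x a - y a := by
  simpa only [sub_eq_add_neg] using hx.add hy.neg

theorem inv (hx : ComputableFamily x) (hx0 : ∀ a, x a ≠ 0) : ComputableFamily fun a => (x a)⁻¹ := by
  obtain ⟨f, hf, hxf⟩ := hx
  -- Searching for a witness of `x a ≠ 0` gives the modulus of continuity of the inversion.
  have hex (a : α) : ∃ m, decide (2 * (1 / 2) ^ m ≤ |f (a, m)|) := by
    have hlim := tendsto_half_pow.const_mul 2
    rw [mul_zero] at hlim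
    obtain ⟨m, hm⟩ := (hlim.eventually_lt (tendsto_of_abs_sub_le_half_pow (hxf a)).abs
      (abs_pos.2 (hx0 a))).exists
    have hm' : ((2 * (1 / 2) ^ m : ℚ) : ℝ) ≤ (|f (a, m)| : ℚ) := by
      push_cast
      exact hm.le
    exact ⟨m, decide_eq_true (Rat.cast_le.1 hm')⟩
  have hm := computable_find (P := fun (a : α) m => decide (2 * (1 / 2) ^ m ≤ |f (a, m)|))
    (by fun_prop) hex
  refine ⟨fun p => (f (p.1, p.2 + 2 * Nat.find (hex p.1) + 1))⁻¹, ?_, fun a n => ?_⟩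
  · have := hm.comp (Computable.fst (α := α) (β := ℕ))
    fun_prop
  · push_cast
    have hu := Rat.cast_le (K := ℝ).2 (of_decide_eq_true (Nat.find_spec (hex a)))
    push_cast at hu
    exact abs_inv_sub_inv_le_of_approx hu (hxf a _) (hxf a _)

theorem div (hx : ComputableFamily x) (hy : ComputableFamily y) (hy0 : ∀ a, y a ≠ 0) :
    ComputableFamily fun a => x a / y a := by
  simpa only [div_eq_mul_inv] using hx.mul (hy.inv hy0)

theorem pow (hx : ComputableFamily x) {k : α → ℕ} (hk : Computable k) :
    ComputableFamily fun a => x a ^ k a := by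
  obtain ⟨f, hf, hxf⟩ := hx
  refine of_tendsto_zero (computableFamily_ratCast (f := fun p => f p ^ k p.1) (by fun_prop))
    (e := fun p => (1 / 2) ^ p.2 * k p.1 * (|f p| + (1 / 2) ^ p.2) ^ (k p.1 - 1)) (by fun_prop)
    (fun a n => ?_) fun a => ?_
  · have hmax : max |x a| |(f (a, n) : ℝ)| ≤ |(f (a, n) : ℝ)| + (1 / 2) ^ n :=
      max_le (by linarith [abs_sub_abs_le_abs_sub (x a) (f (a, n)), hxf a n])
        (le_add_of_nonneg_right (by positivity))
    push_cast
    calc |x a ^ k a - (f (a, n) : ℝ) ^ k a|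
        ≤ |x a - f (a, n)| * k a * max |x a| |(f (a, n) : ℝ)| ^ (k a - 1) := abs_pow_sub_pow_le ..
      _ ≤ _ := by
          gcongr
          exact hxf a n
  · push_cast
    simpa using (tendsto_half_pow.mul_const (k a : ℝ)).mul
      (((tendsto_of_abs_sub_le_half_pow (hxf a)).abs.add tendsto_half_pow).pow (k a - 1))

theorem exists_nat_abs_le (hx : ComputableFamily x) :
    ∃ B : α → ℕ, Computable B ∧ ∀ a, |x a| ≤ B a := by
  obtain ⟨f, hf, hxf⟩ := hx
  refine ⟨fun a => ⌊|f (a, 0)|⌋₊ + 2, by fun_prop, fun a => ?_⟩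
  have hfloor : (|f (a, 0)| : ℝ) < ⌊|f (a, 0)|⌋₊ + 1 := by
    exact_mod_cast Nat.lt_floor_add_one |f (a, 0)|
  have h0 := hxf a 0
  rw [pow_zero] at h0
  push_cast
  linarith [abs_sub_abs_le_abs_sub (x a) (f (a, 0))]

theorem exp_of_abs_le_half (hx : ComputableFamily x) (hx_le : ∀ a, |x a| ≤ 1 / 2) :
    ComputableFamily fun a => Real.exp (x a) := by
  have hfact : Computable Nat.factorial := by
    refine (computable_nat_rec (f := fun n : ℕ => n) (g := fun _ => 1)
      (h := fun _ n y => (n + 1) * y) (by fun_prop) (by fun_prop) (by fun_prop)).of_eq fun n => ?_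
    induction n with
    | zero => rfl
    | succ n ih => rw [Nat.factorial_succ, ← ih]
  have hterm : ComputableFamily fun p : (α × ℕ) × ℕ => x p.1.1 ^ p.2 / (p.2.factorial : ℚ) :=
    ((hx.comp (g := fun p : (α × ℕ) × ℕ => p.1.1) (by fun_prop)).pow (by fun_prop)).div
      (computableFamily_ratCast (f := fun p : (α × ℕ) × ℕ => (p.2.factorial : ℚ)) (by fun_prop))
      fun p => by exact_mod_cast p.2.factorial_ne_zero
  refine of_tendsto_zero (hterm.sum_range (k := fun p => p.2) (by fun_prop))
    (e := fun p => (1 / 2) ^ p.2 * 3) (by fun_prop) (fun a n => ?_) fun a => ?_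
  · have htaylor : |Real.exp (x a) - ∑ i ∈ Finset.range n, x a ^ i / (i.factorial : ℝ)| ≤
        |x a| ^ n * Real.exp |x a| := by
      have h := Complex.norm_exp_sub_sum_le_norm_mul_exp (x a) n
      rw [Complex.norm_real, Real.norm_eq_abs] at h
      exact_mod_cast h
    have hexp : Real.exp |x a| ≤ 3 :=
      (Real.exp_le_exp.2 ((hx_le a).trans (by norm_num))).trans Real.exp_one_lt_three.le
    push_cast
    refine htaylor.trans ?_
    gcongr
    exact hx_le a
  · push_cast
    simpa using tendsto_half_pow.mul_const 3

theorem exp (hx : ComputableFamily x) : ComputableFamily fun a => Real.exp (x a) := by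
  obtain ⟨B, hB, hxB⟩ := hx.exists_nat_abs_le
  have hsmall : ComputableFamily fun a => Real.exp (x a / ((2 * B a + 1 : ℕ) : ℚ)) := by
    refine (hx.div (computableFamily_ratCast (f := fun a => ((2 * B a + 1 : ℕ) : ℚ)) (by fun_prop))
      fun a => by exact_mod_cast (2 * B a).succ_ne_zero).exp_of_abs_le_half fun a => ?_
    push_cast
    rw [abs_div, abs_of_pos (by positivity : (0 : ℝ) < 2 * B a + 1), div_le_iff₀ (by positivity)]
    linarith [hxB a]
  have hpow := hsmall.pow (k := fun a => 2 * B a + 1) (by fun_prop)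
  convert hpow using 2 with a
  rw [← Real.exp_nat_mul]
  push_cast
  field_simp

theorem exists_lower (hx : ComputableFamily x) :
    ∃ g : α × ℕ → ℚ, Computable g ∧ ∀ a n, g (a, n) ≤ x a ∧ x a ≤ g (a, n) + (1 / 2) ^ n := by
  obtain ⟨f, hf, hxf⟩ := hx
  refine ⟨fun p => f (p.1, p.2 + 1) - (1 / 2) ^ (p.2 + 1), by fun_prop, fun a n => ?_⟩
  have h := abs_le.1 (hxf a (n + 1))
  push_cast
  rw [pow_succ] at h ⊢
  constructor <;> linarith

end ComputableFamily

theorem computableFamily_log_two : ComputableFamily fun _ : α => Real.log 2 := by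
  have hsum := computable_rat_sum_range
    (f := fun (p : α × ℕ) i => (1 / 2) ^ (i + 1) / ((i + 1 : ℕ) : ℚ)) (k := fun p => p.2)
    (by fun_prop) (by fun_prop)
  refine ⟨_, hsum, fun _ n => ?_⟩
  have h := Real.abs_log_sub_add_sum_range_le (x := 1 / 2) (by norm_num [abs_lt]) n
  have hlog : Real.log (1 - 1 / 2) = -Real.log 2 := by
    rw [show (1 - 1 / 2 : ℝ) = 2⁻¹ by norm_num, Real.log_inv]
  have hbound : |(1 / 2 : ℝ)| ^ (n + 1) / (1 - |1 / 2|) = (1 / 2) ^ n := by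
    rw [abs_of_pos (by norm_num : (0 : ℝ) < 1 / 2)]
    ring
  rw [hlog, hbound, ← sub_eq_add_neg, abs_sub_comm] at h
  push_cast
  exact h

theorem ComputableReal.computableFamily {T : ℝ} (hT : ComputableReal T) :
    ComputableFamily fun _ : α => T := by
  obtain ⟨f, hf, hTf⟩ := hT
  refine ⟨fun p => f (2 ^ p.2), by fun_prop, fun _ n => ?_⟩
  simpa using (hTf (2 ^ n) Nat.one_le_two_pow).le

end ComputableFamily

section Enumeration

variable {α β : Type*} [Primcodable α] [Primcodable β]

theorem exists_computable_unique_stage {f : α →. β} (hf : Partrec f) :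
    ∃ Q : α → ℕ → Bool, (Computable fun p : α × ℕ => Q p.1 p.2) ∧
      (∀ a, (f a).Dom ↔ ∃ k, Q a k) ∧ ∀ a k l, Q a k → Q a l → k = l := by
  obtain ⟨c, hc⟩ := Nat.Partrec.Code.exists_code.1 hf
  have hdom (a : α) : (f a).Dom ↔ ∃ k, (c.evaln k (Encodable.encode a)).isSome := by
    simp only [Option.isSome_iff_exists, Part.dom_iff_mem]
    rw [exists_comm]
    simp only [← Option.mem_def, ← Nat.Partrec.Code.evaln_complete, hc]
    simp
  have hmono (a : α) {k l : ℕ} (hkl : k ≤ l) (hk : (c.evaln k (Encodable.encode a)).isSome) :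
      (c.evaln l (Encodable.encode a)).isSome := by
    obtain ⟨x, hx⟩ := Option.isSome_iff_exists.1 hk
    exact Option.isSome_iff_exists.2 ⟨x, Nat.Partrec.Code.evaln_mono hkl hx⟩
  have hstage : Computable fun p : α × ℕ => (c.evaln p.2 (Encodable.encode p.1)).isSome :=
    Primrec.option_isSome.to_comp.comp (Nat.Partrec.Code.primrec_evaln.to_comp.comp
      ((Computable.snd.pair (Computable.const c)).pair (Computable.encode.comp Computable.fst)))
  refine ⟨fun a k => (c.evaln (k + 1) (Encodable.encode a)).isSome &&
    !(c.evaln k (Encodable.encode a)).isSome, ?_, fun a => ?_, fun a k l hk hl => ?_⟩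
  · exact computable_bool_and
      (hstage.comp (g := fun p : α × ℕ => (p.1, p.2 + 1)) (by fun_prop))
      (computable_bool_not hstage)
  · rw [hdom a]
    refine ⟨fun h => ?_, fun ⟨k, hk⟩ => ⟨k + 1, (Bool.and_eq_true_iff.1 hk).1⟩⟩
    obtain ⟨k, hk⟩ := Nat.exists_eq_add_one_of_ne_zero (n := Nat.find h) fun h0 => by
      have := Nat.find_spec h
      rw [h0] at this
      simp [Nat.Partrec.Code.evaln] at this
    refine ⟨k, Bool.and_eq_true_iff.2 ⟨hk ▸ Nat.find_spec h, ?_⟩⟩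
    simpa using Nat.find_min h (m := k) (by omega)
  · simp only [Bool.and_eq_true, Bool.not_eq_true'] at hk hl
    rcases lt_trichotomy k l with h | h | h
    · simp [hmono a h hk.1] at hl
    · exact h
    · simp [hmono a h hl.1] at hk

theorem exists_computable_equiv_dom {f : α →. β} (hf : Partrec f) [Infinite f.Dom] :
    ∃ e : ℕ ≃ f.Dom, Computable fun k => (e k : α) := by
  obtain ⟨Q, hQ, hdom, huniq⟩ := exists_computable_unique_stage hf
  let stage (x : ℕ) : Bool :=
    ((Encodable.decode₂ (α × ℕ) x).map fun p => Q p.1 p.2).getD false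
  have hstage : Computable stage :=
    Computable.option_getD (Computable.option_map (g := fun (_ : ℕ) (p : α × ℕ) => Q p.1 p.2)
      Primrec.decode₂.to_comp (hQ.comp Computable.snd)) (Computable.const false)
  let S : Set ℕ := {x | stage x}
  have hS_dec : DecidablePred (· ∈ S) := Classical.decPred _
  have hS : Computable fun x => decide (x ∈ S) := hstage.of_eq fun x => by simp [S]
  have hmem (x : S) : ∃ p : α × ℕ, Encodable.decode₂ (α × ℕ) x = some p ∧ Q p.1 p.2 := by
    obtain ⟨x, hx⟩ := x
    cases hd : Encodable.decode₂ (α × ℕ) x <;> simp_all [S, stage]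
  choose p hp hpQ using hmem
  have hbij : Function.Bijective fun x : S => (⟨(p x).1, (hdom _).2 ⟨_, hpQ x⟩⟩ : f.Dom) := by
    refine ⟨fun x y hxy => ?_, fun ⟨a, ha⟩ => ?_⟩
    · have hfst : (p x).1 = (p y).1 := congrArg Subtype.val hxy
      have hpxy : p x = p y := Prod.ext hfst (huniq _ _ _ (hpQ x) (hfst ▸ hpQ y))
      rw [Subtype.ext_iff, ← Encodable.mem_decode₂.1 (hp x), ← Encodable.mem_decode₂.1 (hp y), hpxy]
    · obtain ⟨k, hk⟩ := (hdom a).1 ha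
      have hx : Encodable.encode (a, k) ∈ S := by
        change stage _ = true
        simp only [stage, Encodable.encodek₂]
        exact hk
      have := (hp ⟨_, hx⟩).symm.trans (Encodable.encodek₂ (a, k))
      exact ⟨⟨_, hx⟩, Subtype.ext (congrArg Prod.fst (Option.some.inj this))⟩
  let e := Equiv.ofBijective _ hbij
  have : Infinite S := e.infinite_iff.2 inferInstance
  refine ⟨(Nat.Subtype.orderIsoOfNat S).toEquiv.trans e, ?_⟩
  refine Computable.option_some_iff.1 ((Computable.option_map
    (g := fun (_ : ℕ) (q : α × ℕ) => q.1) (Primrec.decode₂.to_comp.comp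
    (computable_subtype_ofNat hS)) (Computable.fst.comp Computable.snd)).of_eq fun k => ?_)
  rw [hp, ← Nat.Subtype.orderIsoOfNat_apply]
  rfl

end Enumeration

section Computers

theorem H_le_length {U : Computer} {p s : List Bool} (h : s ∈ U.f p) : H U s ≤ p.length :=
  Nat.sInf_le ⟨p, rfl, h⟩

theorem computable_findIdx_not {α : Type*} [Primcodable α] {f : α → List Bool} (hf : Computable f) :
    Computable fun a => (f a).findIdx (!·) :=
  (Primrec.list_findIdx (f := fun l : List Bool => l) (p := fun _ x => !x) Primrec.id
    (Primrec.not.comp Primrec.snd)).to_comp.comp hf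

theorem findIdx_not_replicate_append (m : ℕ) (w : List Bool) :
    (List.replicate m true ++ false :: w).findIdx (!·) = m := by
  induction m with
  | zero => simp [List.findIdx_cons]
  | succ m ih => simpa [List.replicate_succ, List.findIdx_cons] using ih

/-- The computer running `F` on the self-delimiting programs `1ᵐ0w` with `|w| = b * m`, which are
decoded as the input `(m, w)`. -/
def selfDelimiting (b : ℕ) (F : ℕ × List Bool →. List Bool) (hF : Partrec F) : Computer where
  f x := bif x.length = x.findIdx (!·) + 1 + b * x.findIdx (!·) then
    F (x.findIdx (!·), x.drop (x.findIdx (!·) + 1)) else Part.none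
  partrec := by
    have hidx := computable_findIdx_not Computable.id
    exact Partrec.cond (by fun_prop) (hF.comp (hidx.pair
      (Primrec.list_drop.to_comp.comp (by fun_prop) Computable.id))) Partrec.none
  prefixFree := by
    have hlength {x : List Bool} (hx : (bif x.length = x.findIdx (!·) + 1 + b * x.findIdx (!·) then
        F (x.findIdx (!·), x.drop (x.findIdx (!·) + 1)) else Part.none).Dom) :
        x.length = x.findIdx (!·) + 1 + b * x.findIdx (!·) := by
      by_contra hne
      simp [hne] at hx
    intro p hp q hq ⟨t, htq⟩
    have hp' := hlength hp
    have hq' := hlength hq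
    have hidx : (p ++ t).findIdx (!·) = p.findIdx (!·) := by
      rw [List.findIdx_append, if_pos (by omega)]
    rw [← htq, hidx, List.length_append] at hq'
    have ht : t = [] := List.length_eq_zero_iff.1 (by omega)
    rw [← htq, ht, List.append_nil]

theorem mem_selfDelimiting {b m : ℕ} {F : ℕ × List Bool →. List Bool} (hF : Partrec F)
    {w v : List Bool} (hw : w.length = b * m) (hv : v ∈ F (m, w)) :
    v ∈ (selfDelimiting b F hF).f (List.replicate m true ++ false :: w) := by
  have hdrop : (List.replicate m true ++ false :: w).drop (m + 1) = w := by
    rw [List.append_cons, List.drop_left' (by simp)]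
  simp only [selfDelimiting, findIdx_not_replicate_append, hdrop]
  simpa [hw, add_assoc, add_comm 1] using hv

namespace IsOptimal

variable {U : Computer}

theorem exists_mem (hU : IsOptimal U) (s : List Bool) : ∃ p, s ∈ U.f p := by
  obtain ⟨d, hd⟩ := hU (selfDelimiting 0 (fun _ => Part.some s) (Computable.const s).partrec)
  have hmem := mem_selfDelimiting (b := 0) (m := 0) (w := []) (Computable.const s).partrec rfl
    (Part.mem_some s)
  obtain ⟨p, -, hp⟩ := hd _ (Part.dom_iff_mem.2 ⟨s, hmem⟩)
  exact ⟨p, hp s hmem⟩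

theorem exists_length_eq_H (hU : IsOptimal U) (s : List Bool) :
    ∃ p, p.length = H U s ∧ s ∈ U.f p := by
  obtain ⟨p, hp⟩ := hU.exists_mem s
  exact Nat.sInf_mem (s := {n | ∃ p : List Bool, p.length = n ∧ s ∈ U.f p}) ⟨_, p, rfl, hp⟩

theorem exists_H_le_length_add (hU : IsOptimal U) (C : Computer) :
    ∃ d, ∀ p s, s ∈ C.f p → H U s ≤ p.length + d := by
  obtain ⟨d, hd⟩ := hU C
  refine ⟨d, fun p s hs => ?_⟩
  obtain ⟨p', hp', hmem⟩ := hd p (Part.dom_iff_mem.2 ⟨s, hs⟩)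
  exact (H_le_length (hmem s hs)).trans hp'

theorem exists_H_le_H_add (hU : IsOptimal U) {F : List Bool →. List Bool} (hF : Partrec F) :
    ∃ d, ∀ s, ∀ v ∈ F s, H U v ≤ H U s + d := by
  have hdom {p : List Bool} (hp : ((U.f p).bind F).Dom) : (U.f p).Dom := hp.1
  obtain ⟨d, hd⟩ := hU.exists_H_le_length_add
    { f := fun p => (U.f p).bind F
      partrec := U.partrec.bind (g := fun _ => F) (hF.comp Computable.snd)
      prefixFree := fun p hp q hq => U.prefixFree p (hdom hp) q (hdom hq) }
  refine ⟨d, fun s v hv => ?_⟩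
  obtain ⟨p, hp, hs⟩ := hU.exists_length_eq_H s
  exact hp ▸ hd p v (Part.mem_bind hs hv)

theorem exists_H_le_of_length_eq_mul (hU : IsOptimal U) (b : ℕ) {F : ℕ × List Bool →. List Bool}
    (hF : Partrec F) :
    ∃ d, ∀ m w, w.length = b * m → ∀ v ∈ F (m, w), H U v ≤ (b + 1) * m + d := by
  obtain ⟨d, hd⟩ := hU.exists_H_le_length_add (selfDelimiting b F hF)
  refine ⟨1 + d, fun m w hw v hv => (hd _ v (mem_selfDelimiting hF hw hv)).trans (le_of_eq ?_)⟩
  simp [hw]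
  ring

theorem infinite_domain (hU : IsOptimal U) : Infinite U.domain := by
  choose p hp using hU.exists_mem
  refine Infinite.of_injective (fun s => (⟨p s, Part.dom_iff_mem.2 ⟨s, hp s⟩⟩ : U.domain))
    fun s t hst => ?_
  have hpst : p s = p t := congrArg Subtype.val hst
  exact Part.mem_unique (hp s) (hpst ▸ hp t)

theorem exists_computable_equiv (hU : IsOptimal U) :
    ∃ e : ℕ ≃ U.domain, Computable fun k => (e k : List Bool) :=
  have : Infinite U.f.Dom := hU.infinite_domain
  exists_computable_equiv_dom (f := U.f) U.partrec

end IsOptimal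

namespace PrefixFree

variable {S : Set (List Bool)}

theorem nil_notMem (hS : PrefixFree S) (hS' : S.Nontrivial) : [] ∉ S := fun hnil => by
  obtain ⟨p, hp, hne⟩ := hS'.exists_ne []
  exact hne (hS [] hnil p hp List.nil_prefix).symm

theorem uniquelyDecodable (hS : PrefixFree S) (hnil : [] ∉ S) :
    InformationTheory.UniquelyDecodable S := by
  intro L₁
  induction L₁ with
  | nil =>
    intro L₂ _ hL₂ h
    cases L₂ with
    | nil => rfl
    | cons q L₂ => simp_all
  | cons p L₁ ih =>
    intro L₂ hL₁ hL₂ h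
    rw [List.forall_mem_cons] at hL₁
    cases L₂ with
    | nil => simp_all
    | cons q L₂ =>
      rw [List.forall_mem_cons] at hL₂
      rw [List.flatten_cons, List.flatten_cons] at h
      have hpq : p = q := (List.prefix_or_prefix_of_prefix (List.prefix_append p _)
        (h ▸ List.prefix_append q _)).elim (hS p hL₁.1 q hL₂.1)
        fun hqp => (hS q hL₂.1 p hL₁.1 hqp).symm
      subst hpq
      rw [ih L₂ hL₁.2 hL₂.2 (List.append_cancel_left h)]

theorem sum_half_pow_length_le_one (hS : PrefixFree S) (hnil : [] ∉ S) (u : Finset S) :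
    ∑ p ∈ u, (1 / 2 : ℝ) ^ (p : List Bool).length ≤ 1 := by
  have hsub : ∀ p ∈ u.map (Function.Embedding.subtype _), p ∈ S := by
    simpa using fun p hp _ => hp
  have hu : PrefixFree ((u.map (Function.Embedding.subtype _) : Finset (List Bool)) : Set _) :=
    fun p hp q hq => hS p (hsub p hp) q (hsub q hq)
  have hud := hu.uniquelyDecodable fun h => hnil (hsub [] h)
  simpa using InformationTheory.kraft_mcmillan_inequality hud

theorem summable_half_pow_length (hS : PrefixFree S) (hnil : [] ∉ S) :
    Summable fun p : S => (1 / 2 : ℝ) ^ (p : List Bool).length :=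
  summable_of_sum_le (fun _ => by positivity) (hS.sum_half_pow_length_le_one hnil)

theorem tsum_half_pow_length_le_one (hS : PrefixFree S) (hnil : [] ∉ S) :
    ∑' p : S, (1 / 2 : ℝ) ^ (p : List Bool).length ≤ 1 :=
  (hS.summable_half_pow_length hnil).tsum_le_of_sum_le (hS.sum_half_pow_length_le_one hnil)

end PrefixFree

theorem IsOptimal.nil_notMem_domain {U : Computer} (hU : IsOptimal U) : [] ∉ U.domain :=
  U.prefixFree.nil_notMem (Set.infinite_coe_iff.1 hU.infinite_domain).nontrivial

theorem IsOptimal.summable_half_pow_length {U : Computer} (hU : IsOptimal U) :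
    Summable fun p : U.domain => (1 / 2 : ℝ) ^ (p : List Bool).length :=
  U.prefixFree.summable_half_pow_length hU.nil_notMem_domain

theorem IsOptimal.summable_half_pow_length_equiv {U : Computer} (hU : IsOptimal U)
    (e : ℕ ≃ U.domain) : Summable fun k => (1 / 2 : ℝ) ^ (e k : List Bool).length :=
  (e.summable_iff (f := fun p : U.domain => (1 / 2 : ℝ) ^ (p : List Bool).length)).2
    hU.summable_half_pow_length

theorem IsOptimal.tsum_half_pow_length_equiv_le_one {U : Computer} (hU : IsOptimal U)
    (e : ℕ ≃ U.domain) : ∑' k, (1 / 2 : ℝ) ^ (e k : List Bool).length ≤ 1 :=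
  (e.tsum_eq fun p : U.domain => (1 / 2 : ℝ) ^ (p : List Bool).length).trans_le
    (U.prefixFree.tsum_half_pow_length_le_one hU.nil_notMem_domain)

end Computers

section Moments

open Topology

theorem mul_tsum_add_le_sub {u a : ℕ → ℝ} {c L : ℝ} {N : ℕ} (ha : Summable a)
    (hu : Tendsto u atTop (𝓝 L)) (h : ∀ k ≥ N, c * a k ≤ u (k + 1) - u k) {k : ℕ} (hk : N ≤ k) :
    c * ∑' i, a (i + k) ≤ L - u k := by
  have hsum : Tendsto (fun n => c * ∑ i ∈ Finset.range n, a (i + k)) atTop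
      (𝓝 (c * ∑' i, a (i + k))) :=
    (((summable_nat_add_iff k).2 ha).hasSum.tendsto_sum_nat).const_mul c
  refine le_of_tendsto_of_tendsto' hsum (((tendsto_add_atTop_iff_nat k).2 hu).sub_const (u k))
    fun n => ?_
  calc c * ∑ i ∈ Finset.range n, a (i + k)
      ≤ ∑ i ∈ Finset.range n, (u (i + 1 + k) - u (i + k)) := by
        rw [Finset.mul_sum]
        exact Finset.sum_le_sum fun i _ => by
          simpa only [add_right_comm i 1 k] using h (i + k) (by omega)
    _ = u (n + k) - u k := by
        simpa using Finset.sum_range_sub (fun i => u (i + k)) n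

theorem eventually_tsum_add_bounds {u a : ℕ → ℝ} {r L : ℝ} (hr : 0 < r) (ha : Summable a)
    (ha0 : ∀ᶠ k in atTop, 0 < a k) (hu : Tendsto u atTop (𝓝 L))
    (hratio : Tendsto (fun k => (u (k + 1) - u k) / a k) atTop (𝓝 r)) :
    ∀ᶠ k in atTop,
      r / 2 * ∑' i, a (i + k) ≤ L - u k ∧ L - u k ≤ 2 * r * ∑' i, a (i + k) := by
  obtain ⟨N, hN⟩ := eventually_atTop.1 (ha0.and <| hratio.eventually <|
    Ioo_mem_nhds (show r / 2 < r by linarith) (show r < 2 * r by linarith))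
  refine eventually_atTop.2 ⟨N, fun k hk => ⟨?_, ?_⟩⟩
  · refine mul_tsum_add_le_sub ha hu (fun k hk => ?_) hk
    exact ((lt_div_iff₀ (hN k hk).1).1 (hN k hk).2.1).le
  · have hneg := mul_tsum_add_le_sub (c := -(2 * r)) ha hu.neg (fun k hk => ?_) hk
    · linarith
    · linarith [(div_lt_iff₀ (hN k hk).1).1 (hN k hk).2.2]

theorem exists_pow_mul_pow_le (j : ℕ) {q r : ℝ} (hq : 0 ≤ q) (hqr : q < r) :
    ∃ K, ∀ l : ℕ, (l : ℝ) ^ j * q ^ l ≤ K * r ^ l := by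
  have hr : 0 < r := hq.trans_lt hqr
  obtain ⟨K, hK⟩ := (tendsto_pow_const_mul_const_pow_of_abs_lt_one j (r := q / r) <| by
    rwa [abs_of_nonneg (by positivity), div_lt_one hr]).bddAbove_range
  refine ⟨K, fun l => ?_⟩
  have hl : (l : ℝ) ^ j * (q / r) ^ l ≤ K := hK ⟨l, rfl⟩
  rwa [div_pow, ← mul_div_assoc, div_le_iff₀ (by positivity)] at hl

/-- The `j`-th moment `∑ ℓᵢʲ q^ℓᵢ` of a family of lengths. For the lengths of the programs of a
computer and `q = 2^(-1/T)` these are the sums `Z(T)`, `W(1,T)` and `W(2,T)`. -/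
noncomputable def moment {ι : Type*} (ℓ : ι → ℕ) (q : ℝ) (j : ℕ) : ℝ :=
  ∑' i, (ℓ i : ℝ) ^ j * q ^ ℓ i

/-- The contribution of the first `k` lengths to the `j`-th moment. -/
def partialMoment (ℓ : ℕ → ℕ) (q : ℝ) (k j : ℕ) : ℝ :=
  ∑ i ∈ Finset.range k, (ℓ i : ℝ) ^ j * q ^ ℓ i

/-- The variance of a distribution with unnormalised moments `M 0`, `M 1`, `M 2`. -/
noncomputable def momentVariance (M : ℕ → ℝ) : ℝ :=
  M 2 / M 0 - (M 1 / M 0) ^ 2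

theorem partialMoment_succ (ℓ : ℕ → ℕ) (q : ℝ) (k j : ℕ) :
    partialMoment ℓ q (k + 1) j = partialMoment ℓ q k j + (ℓ k : ℝ) ^ j * q ^ ℓ k :=
  Finset.sum_range_succ _ _

theorem partialMoment_zero_pos (ℓ : ℕ → ℕ) {q : ℝ} (hq : 0 < q) {k : ℕ} (hk : k ≠ 0) :
    0 < partialMoment ℓ q k 0 :=
  Finset.sum_pos (fun i _ => by positivity) (Finset.nonempty_range_iff.2 hk)

theorem momentVariance_add_sub {M : ℕ → ℝ} {l w : ℝ} (hM : M 0 ≠ 0) (hMw : M 0 + w ≠ 0) :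
    momentVariance (fun j => M j + l ^ j * w) - momentVariance M =
      w / (M 0 + w) * (M 0 / (M 0 + w) * (l - M 1 / M 0) ^ 2 - momentVariance M) := by
  simp only [momentVariance, pow_zero, pow_one, one_mul]
  field_simp
  ring

variable {ι : Type*} {ℓ : ι → ℕ} {q : ℝ}

theorem summable_pow_mul_pow (hℓ : Summable fun i => (1 / 2 : ℝ) ^ ℓ i) (hq : 0 ≤ q)
    (hq2 : q < 1 / 2) (j : ℕ) : Summable fun i => (ℓ i : ℝ) ^ j * q ^ ℓ i := by
  obtain ⟨K, hK⟩ := exists_pow_mul_pow_le j hq hq2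
  exact (hℓ.mul_left K).of_nonneg_of_le (fun i => by positivity) fun i => hK (ℓ i)

theorem moment_zero_pos [Nonempty ι] (hℓ : Summable fun i => (1 / 2 : ℝ) ^ ℓ i) (hq : 0 < q)
    (hq2 : q < 1 / 2) : 0 < moment ℓ q 0 :=
  (summable_pow_mul_pow hℓ hq.le hq2 0).tsum_pos (fun i => by positivity)
    (Classical.arbitrary ι) (by positivity)

theorem moment_comp_equiv {κ : Type*} (e : κ ≃ ι) (j : ℕ) :
    moment (fun i => ℓ (e i)) q j = moment ℓ q j :=
  e.tsum_eq fun i => (ℓ i : ℝ) ^ j * q ^ ℓ i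

variable {ℓ : ℕ → ℕ}

theorem tendsto_partialMoment (hℓ : Summable fun i => (1 / 2 : ℝ) ^ ℓ i) (hq : 0 ≤ q)
    (hq2 : q < 1 / 2) (j : ℕ) :
    Tendsto (fun k => partialMoment ℓ q k j) atTop (𝓝 (moment ℓ q j)) :=
  (summable_pow_mul_pow hℓ hq hq2 j).hasSum.tendsto_sum_nat

theorem tendsto_momentVariance_partialMoment (hℓ : Summable fun i => (1 / 2 : ℝ) ^ ℓ i)
    (hq : 0 < q) (hq2 : q < 1 / 2) :
    Tendsto (fun k => momentVariance (partialMoment ℓ q k)) atTop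
      (𝓝 (momentVariance (moment ℓ q))) :=
  have hM := tendsto_partialMoment hℓ hq.le hq2
  have hZ := (moment_zero_pos hℓ hq hq2).ne'
  ((hM 2).div (hM 0) hZ).sub (((hM 1).div (hM 0) hZ).pow 2)

theorem tendsto_length_of_summable (hℓ : Summable fun i => (1 / 2 : ℝ) ^ ℓ i) :
    Tendsto ℓ atTop atTop := by
  refine tendsto_atTop.2 fun L => ?_
  filter_upwards [hℓ.tendsto_atTop_zero.eventually (gt_mem_nhds
    (show (0 : ℝ) < (1 / 2) ^ L by positivity))] with i hi
  exact ((pow_lt_pow_iff_right_of_lt_one₀ (by norm_num) (by norm_num)).1 hi).le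

theorem momentVariance_partialMoment_succ_sub (hq : 0 < q) {k : ℕ} (hk : k ≠ 0) (hℓk : ℓ k ≠ 0) :
    (momentVariance (partialMoment ℓ q (k + 1)) - momentVariance (partialMoment ℓ q k)) /
        ((ℓ k : ℝ) ^ 2 * q ^ ℓ k) =
      (partialMoment ℓ q (k + 1) 0)⁻¹ *
        (partialMoment ℓ q k 0 / partialMoment ℓ q (k + 1) 0 *
            (1 - partialMoment ℓ q k 1 / partialMoment ℓ q k 0 / ℓ k) ^ 2 -
          momentVariance (partialMoment ℓ q k) / (ℓ k : ℝ) ^ 2) := by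
  have hZ := partialMoment_zero_pos ℓ hq hk
  have hZ' := partialMoment_zero_pos ℓ hq k.succ_ne_zero
  have hsucc : partialMoment ℓ q (k + 1) =
      fun j => partialMoment ℓ q k j + (ℓ k : ℝ) ^ j * q ^ ℓ k :=
    funext (partialMoment_succ ℓ q k)
  have hℓ0 : (ℓ k : ℝ) ≠ 0 := Nat.cast_ne_zero.2 hℓk
  have hw : q ^ ℓ k ≠ 0 := by positivity
  have hZ1 : partialMoment ℓ q (k + 1) 0 = partialMoment ℓ q k 0 + q ^ ℓ k := by
    simp [partialMoment_succ]
  rw [hZ1] at hZ' ⊢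
  rw [hsucc, momentVariance_add_sub hZ.ne' hZ'.ne']
  generalize momentVariance (partialMoment ℓ q k) = V
  field_simp

/-- Each length `ℓ k` raises the variance by about `ℓ k ^ 2 * q ^ ℓ k / Z`: since `ℓ k → ∞`, its
distance from the mean dominates the mean and the variance, which stay bounded. -/
theorem tendsto_momentVariance_increment (hℓ : Summable fun i => (1 / 2 : ℝ) ^ ℓ i)
    (hq : 0 < q) (hq2 : q < 1 / 2) :
    Tendsto (fun k => (momentVariance (partialMoment ℓ q (k + 1)) -
        momentVariance (partialMoment ℓ q k)) / ((ℓ k : ℝ) ^ 2 * q ^ ℓ k)) atTop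
      (𝓝 (moment ℓ q 0)⁻¹) := by
  have hZ := (moment_zero_pos hℓ hq hq2).ne'
  have hM := tendsto_partialMoment hℓ hq.le hq2
  have hZ_succ := (tendsto_add_atTop_iff_nat 1).2 (hM 0)
  have hℓ_top : Tendsto (fun k => (ℓ k : ℝ)) atTop atTop :=
    tendsto_natCast_atTop_atTop.comp (tendsto_length_of_summable hℓ)
  have hmean := ((hM 1).div (hM 0) hZ).div_atTop hℓ_top
  have hvar := (tendsto_momentVariance_partialMoment hℓ hq hq2).div_atTop
    ((tendsto_pow_atTop two_ne_zero).comp hℓ_top)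
  have hlim := (hZ_succ.inv₀ hZ).mul
    ((((hM 0).div hZ_succ hZ).mul ((hmean.const_sub 1).pow 2)).sub hvar)
  rw [div_self hZ, sub_zero, sub_zero, one_pow, one_mul, mul_one] at hlim
  refine hlim.congr' ?_
  filter_upwards [eventually_ne_atTop 0,
    (tendsto_length_of_summable hℓ).eventually_ne_atTop 0] with k hk hℓk
  exact (momentVariance_partialMoment_succ_sub hq hk hℓk).symm

theorem eventually_momentVariance_sub_bounds (hℓ : Summable fun i => (1 / 2 : ℝ) ^ ℓ i)
    (hq : 0 < q) (hq2 : q < 1 / 2) :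
    ∀ᶠ k in atTop,
      (moment ℓ q 0)⁻¹ / 2 * ∑' i, (ℓ (i + k) : ℝ) ^ 2 * q ^ ℓ (i + k) ≤
          momentVariance (moment ℓ q) - momentVariance (partialMoment ℓ q k) ∧
        momentVariance (moment ℓ q) - momentVariance (partialMoment ℓ q k) ≤
          2 * (moment ℓ q 0)⁻¹ * ∑' i, (ℓ (i + k) : ℝ) ^ 2 * q ^ ℓ (i + k) := by
  refine eventually_tsum_add_bounds (inv_pos.2 (moment_zero_pos hℓ hq hq2))
    (summable_pow_mul_pow hℓ hq.le hq2 2) ?_ (tendsto_momentVariance_partialMoment hℓ hq hq2)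
    (tendsto_momentVariance_increment hℓ hq hq2)
  filter_upwards [(tendsto_length_of_summable hℓ).eventually_ne_atTop 0] with k hk
  have : 0 < (ℓ k : ℝ) := by positivity
  positivity

theorem computableFamily_partialMoment {α : Type*} [Primcodable α] (hℓ : Computable ℓ)
    (hq : ComputableFamily fun _ : α => q) {k : α → ℕ} (hk : Computable k) (j : ℕ) :
    ComputableFamily fun n => partialMoment ℓ q (k n) j := by
  have hlen : Computable fun p : α × ℕ => ℓ p.2 := by fun_prop
  have hterm : ComputableFamily fun p : α × ℕ => (ℓ p.2 : ℝ) ^ j * q ^ ℓ p.2 := by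
    have hcast := computableFamily_ratCast (f := fun p : α × ℕ => (ℓ p.2 : ℚ)) (by fun_prop)
    simp only [Rat.cast_natCast] at hcast
    exact (hcast.pow (.const j)).mul ((hq.comp Computable.fst).pow hlen)
  exact hterm.sum_range hk

theorem computableFamily_momentVariance {α : Type*} [Primcodable α] {M : α → ℕ → ℝ}
    (hM : ∀ j, ComputableFamily fun n => M n j) (hM0 : ∀ n, M n 0 ≠ 0) :
    ComputableFamily fun n => momentVariance (M n) :=
  ((hM 2).div (hM 0) hM0).sub (((hM 1).div (hM 0) hM0).pow (.const 2))

end Moments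

section BinaryExpansion

variable {α β : Type*} [Primcodable α] [Primcodable β]

theorem computable_map_range {f : α → ℕ → β} {n : α → ℕ} (hn : Computable n)
    (hf : Computable fun p : α × ℕ => f p.1 p.2) :
    Computable fun a => (List.range (n a)).map (f a) := by
  refine (computable_nat_rec (h := fun a i l => l ++ [f a i]) hn (Computable.const [])
    (Primrec.list_concat.to_comp.comp (Computable.snd.comp Computable.snd)
      (hf.comp (g := fun p : α × ℕ × List β => (p.1, p.2.1)) (by fun_prop)))).of_eq fun a => ?_
  induction n a with
  | zero => rfl
  | succ n ih => simp only [ih, List.range_succ, List.map_append, List.map_singleton]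

@[fun_prop]
theorem computable_replicate {f : α → ℕ} (hf : Computable f) (b : β) :
    Computable fun a => List.replicate (f a) b :=
  (computable_map_range (f := fun _ _ => b) hf (Computable.const b)).of_eq fun a => by simp

/-- The natural number with the given binary digits, most significant first. -/
def binValue (s : List Bool) : ℕ :=
  s.foldl (fun v b => 2 * v + b.toNat) 0

/-- The `n` low-order binary digits of `v`, most significant first. -/
def lowBits (n v : ℕ) : List Bool :=
  (List.range n).map fun i => decide (v / 2 ^ (n - 1 - i) % 2 = 1)

@[fun_prop]
theorem computable_binValue {f : α → List Bool} (hf : Computable f) :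
    Computable fun a => binValue (f a) := by
  have hstep : Primrec₂ fun (_ : List Bool) (p : ℕ × Bool) => 2 * p.1 + p.2.toNat :=
    Primrec.nat_add.comp (Primrec.nat_mul.comp (Primrec.const 2) (Primrec.fst.comp Primrec.snd))
      ((Primrec.dom_finite Bool.toNat).comp (Primrec.snd.comp Primrec.snd))
  exact (Primrec.list_foldl Primrec.id (Primrec.const 0) hstep).to_comp.comp hf

@[fun_prop]
theorem computable_lowBits {f g : α → ℕ} (hf : Computable f) (hg : Computable g) :
    Computable fun a => lowBits (f a) (g a) :=
  computable_map_range hf (by fun_prop)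

theorem length_bits (x : ℝ) (n : ℕ) : (bits x n).length = n := by simp [bits]

theorem bits_fract (x : ℝ) (n : ℕ) : bits (Int.fract x) n = bits x n := by
  simp only [bits, binDigit, Int.fract_fract]

theorem floor_mul_two_pow_add_div (x : ℝ) (a b : ℕ) :
    ⌊x * 2 ^ (a + b)⌋₊ / 2 ^ b = ⌊x * 2 ^ a⌋₊ := by
  rw [← Nat.floor_div_natCast]
  congr 1
  push_cast
  rw [pow_add]
  field_simp

variable {x : ℝ}

theorem binDigit_eq_decide (hx0 : 0 ≤ x) (hx1 : x < 1) (n : ℕ) :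
    binDigit x n = decide (⌊x * 2 ^ n⌋₊ % 2 = 1) := by
  rw [binDigit, Int.fract_eq_self.2 ⟨hx0, hx1⟩, ← Int.natCast_floor_eq_floor (by positivity)]
  norm_cast

theorem bits_eq_lowBits (hx0 : 0 ≤ x) (hx1 : x < 1) (n : ℕ) :
    bits x n = lowBits n ⌊x * 2 ^ n⌋₊ := by
  refine List.map_congr_left fun i hi => ?_
  have hn : i + 1 + (n - 1 - i) = n := by have := List.mem_range.1 hi; omega
  rw [binDigit_eq_decide hx0 hx1, ← floor_mul_two_pow_add_div x (i + 1) (n - 1 - i), hn]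

theorem binValue_bits (hx0 : 0 ≤ x) (hx1 : x < 1) (n : ℕ) :
    binValue (bits x n) = ⌊x * 2 ^ n⌋₊ := by
  induction n with
  | zero => simpa [bits, binValue] using (Nat.floor_eq_zero.2 hx1).symm
  | succ n ih =>
    have hsucc : binValue (bits x (n + 1)) =
        2 * binValue (bits x n) + (binDigit x (n + 1)).toNat := by
      simp [bits, binValue, List.range_succ]
    have hdiv := floor_mul_two_pow_add_div x n 1
    rw [pow_one] at hdiv
    rw [hsucc, ih, binDigit_eq_decide hx0 hx1, ← hdiv]
    rcases Nat.mod_two_eq_zero_or_one ⌊x * 2 ^ (n + 1)⌋₊ with h | h <;> simp [h] <;> omega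

theorem exists_length_eq_binValue_lt (hx0 : 0 < x) (hx1 : x ≤ 1) (n : ℕ) :
    ∃ w : List Bool, w.length = n ∧ (binValue w : ℝ) < x * 2 ^ n ∧
      x * 2 ^ n ≤ binValue w + 1 := by
  have h2 : (0 : ℝ) < 2 ^ n := by positivity
  obtain ⟨v, hv⟩ := Nat.exists_eq_succ_of_ne_zero (Nat.ceil_pos.2 (mul_pos hx0 h2)).ne'
  have hlt : (v : ℝ) < x * 2 ^ n := Nat.lt_ceil.1 (by omega)
  have hle : x * 2 ^ n ≤ (v : ℝ) + 1 := by exact_mod_cast hv ▸ Nat.le_ceil (x * 2 ^ n)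
  have hv1 : (v : ℝ) / 2 ^ n < 1 := by rw [div_lt_one h2]; nlinarith
  refine ⟨bits (v / 2 ^ n) n, length_bits _ _, ?_⟩
  rw [binValue_bits (by positivity) hv1, div_mul_cancel₀ _ h2.ne', Nat.floor_natCast]
  exact ⟨hlt, hle⟩

theorem exists_bits_eq_lowBits_floor_add (hx0 : 0 ≤ x) (hx1 : x < 1) {q : ℚ} {n : ℕ} {C : ℝ}
    (hq : q ≤ x) (hqC : x - q ≤ C * (1 / 2) ^ n) :
    ∃ e < ⌈C⌉₊ + 1, bits x n = lowBits n (⌊q * 2 ^ n⌋₊ + e) := by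
  have h2 : (0 : ℝ) < 2 ^ n := by positivity
  have hfloor : ⌊q * 2 ^ n⌋₊ = ⌊(q * 2 ^ n : ℝ)⌋₊ := by
    rw [← Int.floor_toNat, ← Int.floor_toNat, ← Rat.floor_cast (α := ℝ)]
    push_cast
    rfl
  obtain ⟨e, he⟩ := Nat.exists_eq_add_of_le
    (Nat.floor_le_floor (mul_le_mul_of_nonneg_right hq h2.le))
  refine ⟨e, ?_, by rw [bits_eq_lowBits hx0 hx1, hfloor, he]⟩
  have hx : (⌊(q * 2 ^ n : ℝ)⌋₊ : ℝ) + e ≤ x * 2 ^ n := by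
    exact_mod_cast he ▸ Nat.floor_le (show 0 ≤ x * 2 ^ n by positivity)
  have hC : x * 2 ^ n - q * 2 ^ n ≤ C := by
    rwa [one_div_pow, mul_one_div, le_div_iff₀ h2, sub_mul] at hqC
  have heC : (e : ℝ) < ⌈C⌉₊ + 1 := by
    linarith [Nat.lt_floor_add_one (q * 2 ^ n : ℝ), Nat.le_ceil C]
  exact_mod_cast heC

end BinaryExpansion

section TailApproximation

open Topology

/-- The rationals `g k` approximate `x` from below with errors comparable to the tails
`∑_{i ≥ k + k₀} a i` of a series, up to an additional error `2⁻ᵏ` made in computing `g k`. -/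
def IsTailApprox (a : ℕ → ℝ) (k₀ : ℕ) (g : ℕ → ℚ) (x : ℝ) : Prop :=
  ∃ c > 0, ∃ C > 0, ∀ k,
    c * ∑' i, a (i + (k + k₀)) ≤ x - g k ∧ x - g k ≤ C * ∑' i, a (i + (k + k₀)) + (1 / 2) ^ k

namespace IsTailApprox

variable {a : ℕ → ℝ} {k₀ : ℕ} {g : ℕ → ℚ} {x : ℝ}

theorem le (h : IsTailApprox a k₀ g x) (ha : 0 ≤ a) (k : ℕ) : (g k : ℝ) ≤ x := by
  obtain ⟨c, hc, _, _, hcg⟩ := h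
  exact sub_nonneg.1 ((mul_nonneg hc.le (tsum_nonneg fun i => ha _)).trans (hcg k).1)

theorem tendsto (h : IsTailApprox a k₀ g x) (ha : 0 ≤ a) :
    Tendsto (fun k => (g k : ℝ)) atTop (𝓝 x) := by
  have hgx := h.le ha
  obtain ⟨_, _, C, _, hC⟩ := h
  have herr : Tendsto (fun k => C * ∑' i, a (i + (k + k₀)) + (1 / 2) ^ k) atTop (𝓝 0) := by
    simpa using (((tendsto_add_atTop_iff_nat k₀).2
      (tendsto_sum_nat_add a)).const_mul C).add tendsto_half_pow
  have hsub := squeeze_zero (fun k => sub_nonneg.2 (hgx k)) (fun k => (hC k).2) herr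
  simpa using hsub.const_sub x

theorem sub_intCast (h : IsTailApprox a k₀ g x) (z : ℤ) :
    IsTailApprox a k₀ (fun k => g k - z) (x - z) := by
  obtain ⟨c, hc, C, hC, hcg⟩ := h
  refine ⟨c, hc, C, hC, fun k => ?_⟩
  rw [show x - z - ((g k - z : ℚ) : ℝ) = x - g k by push_cast; ring]
  exact hcg k

theorem leftComputable (h : IsTailApprox a k₀ g x) (ha : 0 ≤ a) (hg : Computable g) :
    LeftComputable x :=
  ⟨fun k => -g k, by fun_prop, fun k => by simpa using h.le ha k,
    by simpa using (h.tendsto ha).neg⟩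

end IsTailApprox

end TailApproximation

section Randomness

open Topology

theorem exists_mem_rfind {P : ℕ → Bool} (hP : ∃ n, P n = true) :
    ∃ k, P k = true ∧ k ∈ Nat.rfind fun n => Part.some (P n) := by
  obtain ⟨n, hn⟩ := hP
  have hdom : (Nat.rfind fun n => Part.some (P n)).Dom :=
    Nat.rfind_dom.2 ⟨n, Part.mem_some_iff.2 hn.symm, fun _ => trivial⟩
  have hk := Part.get_mem hdom
  exact ⟨_, (Part.mem_some_iff.1 (Nat.rfind_spec hk)).symm, hk⟩

/-- The weight `2^(-1/T)` of one program bit at temperature `T`. -/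
noncomputable def bitWeight (T : ℝ) : ℝ :=
  (2 : ℝ) ^ (-1 / T)

theorem bitWeight_pow (T : ℝ) (l : ℕ) : bitWeight T ^ l = (2 : ℝ) ^ (-(l : ℝ) / T) := by
  rw [bitWeight, ← Real.rpow_mul_natCast zero_le_two]
  ring_nf

theorem bitWeight_pos (T : ℝ) : 0 < bitWeight T :=
  Real.rpow_pos_of_pos two_pos _

theorem bitWeight_eq_exp (T : ℝ) : bitWeight T = Real.exp (-(Real.log 2 / T)) := by
  rw [bitWeight, Real.rpow_def_of_pos two_pos]
  ring_nf

theorem bitWeight_lt_half {T : ℝ} (hT0 : 0 < T) (hT1 : T < 1) : bitWeight T < 1 / 2 := by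
  rw [bitWeight, one_div, ← Real.rpow_neg_one]
  refine Real.rpow_lt_rpow_of_exponent_lt one_lt_two ?_
  rw [div_lt_iff₀ hT0]
  linarith

/-- Taking logarithms, `n - L n / T + 2 * logb 2 (L n)` is bounded above; since this forces
`L n → ∞`, the logarithm is what pushes `L n - T * n` to infinity. -/
theorem tendsto_sub_mul_atTop_of_sq_mul_bitWeight_pow_le {T c C : ℝ} (hT : 0 < T) (hc : 0 < c)
    {L : ℕ → ℕ} (hL1 : ∀ n, 1 ≤ L n)
    (hL : ∀ n, c * ((L n : ℝ) ^ 2 * bitWeight T ^ L n) ≤ C * (1 / 2) ^ n) :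
    Tendsto (fun n => (L n : ℝ) - T * n) atTop atTop := by
  set B := T * (Real.logb 2 c - Real.logb 2 C)
  have hL0 (n) : (0 : ℝ) < L n := Nat.cast_pos.2 (hL1 n)
  have hlog (n) : B + 2 * T * Real.logb 2 (L n) ≤ L n - T * n := by
    have hlhs : 0 < c * ((L n : ℝ) ^ 2 * bitWeight T ^ L n) := by
      have := hL0 n; have := bitWeight_pos T; positivity
    have hC : 0 < C := pos_of_mul_pos_left (hlhs.trans_le (hL n)) (by positivity)
    have h := Real.logb_le_logb_of_le one_lt_two hlhs (hL n)
    rw [Real.logb_mul hc.ne' (by have := hL0 n; have := bitWeight_pos T; positivity),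
      Real.logb_mul (by have := hL0 n; positivity) (by have := bitWeight_pos T; positivity),
      Real.logb_mul hC.ne' (by positivity), Real.logb_pow, Real.logb_pow, Real.logb_pow,
      bitWeight, Real.logb_rpow two_pos (by norm_num), one_div, Real.logb_inv,
      Real.logb_self_eq_one one_lt_two] at h
    have hT' := mul_le_mul_of_nonneg_left h hT.le
    field_simp at hT'
    simp only [B]
    push_cast at hT'
    linarith
  have hL_top : Tendsto (fun n => (L n : ℝ)) atTop atTop := by
    refine tendsto_atTop_mono (f := fun n : ℕ => B + T * n) (fun n => ?_)
      (tendsto_atTop_add_const_left _ _ (tendsto_natCast_atTop_atTop.const_mul_atTop hT))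
    have hlog0 : 0 ≤ Real.logb 2 (L n) :=
      Real.logb_nonneg one_lt_two (by exact_mod_cast hL1 n)
    linarith [hlog n, mul_nonneg hT.le hlog0]
  exact tendsto_atTop_mono hlog (tendsto_atTop_add_const_left _ _
    (((Real.tendsto_logb_atTop one_lt_two).comp hL_top).const_mul_atTop (by positivity)))

variable {U : Computer} {e : ℕ ≃ U.domain}

theorem computable_output (he : Computable fun k => (e k : List Bool)) :
    Computable fun k => (U.f (e k)).get (e k).2 := by
  unfold Computable
  exact (U.partrec.comp he).of_eq fun k => (Part.some_get (e k).2).symm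

/-- The string of zeros with one zero more than all outputs of the first `k` programs together: an
output that none of these programs produces. -/
def freshOutput (e : ℕ ≃ U.domain) (k : ℕ) : List Bool :=
  List.replicate (∑ i ∈ Finset.range k, ((U.f (e i)).get (e i).2).length + 1) false

theorem computable_freshOutput (he : Computable fun k => (e k : List Bool)) :
    Computable (freshOutput e) :=
  computable_replicate (Primrec.succ.to_comp.comp (computable_sum_range (by fun_prop)
    (f := fun _ i => ((U.f (e i)).get (e i).2).length)
    (computable_length ((computable_output he).comp Computable.snd)) Computable.id)) false

theorem le_of_freshOutput_mem {j k : ℕ} (h : freshOutput e k ∈ U.f (e j)) : k ≤ j := by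
  by_contra! hjk
  have hle := Finset.single_le_sum (f := fun i => ((U.f (e i)).get (e i).2).length)
    (fun _ _ => Nat.zero_le _) (Finset.mem_range.2 hjk)
  simp only [Part.get_eq_of_mem h (e j).2] at hle
  rw [freshOutput, List.length_replicate] at hle
  omega

/-- From the first `n` bits of `x` one computes a stage `k` at which `g k` is within `2 * 2⁻ⁿ` of
`x`, hence a string that no program listed before stage `k + k₀` outputs; its shortest program is
listed later. -/
theorem IsOptimal.exists_length_le_H_bits_add (hU : IsOptimal U)
    (he : Computable fun k => (e k : List Bool)) {g : ℕ → ℚ} (hg : Computable g) (k₀ : ℕ) {x : ℝ}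
    (hx0 : 0 ≤ x) (hx1 : x < 1) (hgx : Tendsto (fun k => (g k : ℝ)) atTop (𝓝 x)) :
    ∃ d, ∀ n, ∃ k j, k + k₀ ≤ j ∧ x - g k ≤ 2 * (1 / 2) ^ n ∧
      (e j : List Bool).length ≤ H U (bits x n) + d := by
  let P (s : List Bool) (k : ℕ) : Bool := decide ((binValue s : ℚ) ≤ g k * 2 ^ s.length + 1)
  have hfresh := computable_freshOutput he
  obtain ⟨d, hd⟩ := hU.exists_H_le_H_add (partrec_rfind_map (P := P)
    (G := fun _ k => freshOutput e (k + k₀)) (by fun_prop) (by fun_prop))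
  refine ⟨d, fun n => ?_⟩
  have h2 : (0 : ℝ) < 2 ^ n := by positivity
  have hP (k : ℕ) : P (bits x n) k = true ↔ (⌊x * 2 ^ n⌋₊ : ℝ) ≤ g k * 2 ^ n + 1 := by
    rw [decide_eq_true_iff, length_bits, binValue_bits hx0 hx1, ← Rat.cast_le (K := ℝ)]
    push_cast
    rfl
  have hex : ∃ k, P (bits x n) k = true := by
    have hlt : (⌊x * 2 ^ n⌋₊ : ℝ) < x * 2 ^ n + 1 :=
      (Nat.floor_le (by positivity)).trans_lt (lt_add_one _)
    obtain ⟨k, hk⟩ := (((hgx.mul_const (2 ^ n)).add_const 1).eventually (lt_mem_nhds hlt)).exists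
    exact ⟨k, (hP k).2 hk.le⟩
  obtain ⟨k, hk, hmem⟩ := exists_mem_rfind hex
  obtain ⟨p, hp, hpv⟩ := hU.exists_length_eq_H (freshOutput e (k + k₀))
  obtain ⟨j, hj⟩ := e.surjective ⟨p, Part.dom_iff_mem.2 ⟨_, hpv⟩⟩
  have hjp : (e j : List Bool) = p := congrArg Subtype.val hj
  refine ⟨k, j, le_of_freshOutput_mem (hjp ▸ hpv), ?_, hjp ▸ hp ▸ hd _ _ (Part.mem_map _ hmem)⟩
  rw [one_div_pow, mul_one_div, le_div_iff₀ h2]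
  linarith [(hP k).1 hk, Nat.lt_floor_add_one (x * 2 ^ n)]

theorem IsTailApprox.chaitinRandom {g : ℕ → ℚ} {k₀ : ℕ} {x T : ℝ} (hU : IsOptimal U)
    (he : Computable fun k => (e k : List Bool)) (hT0 : 0 < T) (hT1 : T < 1) (hg : Computable g)
    (h : IsTailApprox (fun i => ((e i : List Bool).length : ℝ) ^ 2 *
      bitWeight T ^ (e i : List Bool).length) k₀ g x) :
    ChaitinRandom U T x := by
  have hq := bitWeight_pos T
  have hsum := summable_pow_mul_pow (hU.summable_half_pow_length_equiv e) hq.le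
    (bitWeight_lt_half hT0 hT1) 2
  obtain ⟨d, hd⟩ := hU.exists_length_le_H_bits_add he (g := fun k => g k - ⌊x⌋) (by fun_prop) k₀
    (Int.fract_nonneg x) (Int.fract_lt_one x) ((h.sub_intCast ⌊x⌋).tendsto fun i => by positivity)
  choose k j hkj hgk hj using hd
  obtain ⟨c, hc, _, _, hcg⟩ := h.sub_intCast ⌊x⌋
  have hterm (n : ℕ) : c * (((e (j n) : List Bool).length : ℝ) ^ 2 *
      bitWeight T ^ (e (j n) : List Bool).length) ≤ 2 * (1 / 2) ^ n := by
    refine le_trans ?_ ((hcg (k n)).1.trans (hgk n))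
    have hle := ((summable_nat_add_iff (k n + k₀)).2 hsum).le_tsum (j n - (k n + k₀))
      fun i _ => by positivity
    rw [Nat.sub_add_cancel (hkj n)] at hle
    exact mul_le_mul_of_nonneg_left hle hc.le
  have hlen (n : ℕ) : 1 ≤ (e (j n) : List Bool).length :=
    List.length_pos_iff.2 fun hnil => hU.nil_notMem_domain (hnil ▸ (e (j n)).2)
  refine tendsto_atTop_mono (fun n => ?_) (tendsto_atTop_add_const_right _ (-(d : ℝ))
    (tendsto_sub_mul_atTop_of_sq_mul_bitWeight_pow_le hT0 hc hlen hterm))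
  have hjn : (((e (j n) : List Bool).length : ℕ) : ℝ) ≤ H U (bits x n) + d := by
    exact_mod_cast bits_fract x n ▸ hj n
  linarith

end Randomness

section Compression

open Topology

variable {ℓ : ℕ → ℕ}

theorem exists_tsum_sq_mul_pow_le {q ρ : ℝ} (hℓ : Summable fun i => (1 / 2 : ℝ) ^ ℓ i)
    (hq : 0 ≤ q) (hqρ : q < ρ) (hρ : ρ ≤ 1 / 2) :
    ∃ K, ∀ k L : ℕ, ∑' i, (1 / 2 : ℝ) ^ ℓ (i + k) ≤ (1 / 2) ^ L →
      ∑' i, (ℓ (i + k) : ℝ) ^ 2 * q ^ ℓ (i + k) ≤ K * ρ ^ L := by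
  obtain ⟨K, hK⟩ := exists_pow_mul_pow_le 2 hq hqρ
  have hK0 : 0 ≤ K := by simpa using hK 0
  have hρ0 : 0 ≤ ρ := hq.trans hqρ.le
  have hmul (l : ℕ) : ρ ^ l = (2 * ρ) ^ l * (1 / 2) ^ l := by
    rw [← mul_pow]
    ring_nf
  refine ⟨K, fun k L hL => ?_⟩
  have htail : Summable fun i => (1 / 2 : ℝ) ^ ℓ (i + k) := (summable_nat_add_iff k).2 hℓ
  have hle (i : ℕ) : L ≤ ℓ (i + k) :=
    (pow_le_pow_iff_right_of_lt_one₀ (by norm_num) (by norm_num)).1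
      ((htail.le_tsum i fun _ _ => by positivity).trans hL)
  have hterm (i : ℕ) : (ℓ (i + k) : ℝ) ^ 2 * q ^ ℓ (i + k) ≤
      K * (2 * ρ) ^ L * (1 / 2) ^ ℓ (i + k) := by
    refine (hK _).trans ?_
    rw [hmul, mul_assoc]
    gcongr ?_ * (?_ * _)
    exact pow_le_pow_of_le_one (by positivity) (by linarith) (hle i)
  calc ∑' i, (ℓ (i + k) : ℝ) ^ 2 * q ^ ℓ (i + k)
      ≤ ∑' i, K * (2 * ρ) ^ L * (1 / 2) ^ ℓ (i + k) :=
        Summable.tsum_le_tsum hterm ((htail.mul_left _).of_nonneg_of_le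
          (fun i => by positivity) hterm) (htail.mul_left _)
    _ = K * (2 * ρ) ^ L * ∑' i, (1 / 2) ^ ℓ (i + k) := tsum_mul_left
    _ ≤ K * (2 * ρ) ^ L * (1 / 2) ^ L := by gcongr
    _ = K * ρ ^ L := by rw [hmul, mul_assoc]

theorem tsum_add_le_half_pow_of_le {L v : ℕ} {k : ℕ} (hℓ : Summable fun i => (1 / 2 : ℝ) ^ ℓ i)
    (hv : (∑' i, (1 / 2 : ℝ) ^ ℓ i) * 2 ^ L ≤ v + 1)
    (hk : (v : ℝ) ≤ (∑ i ∈ Finset.range k, (1 / 2 : ℝ) ^ ℓ i) * 2 ^ L) :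
    ∑' i, (1 / 2 : ℝ) ^ ℓ (i + k) ≤ (1 / 2) ^ L := by
  rw [← hℓ.sum_add_tsum_nat_add k, add_mul] at hv
  rw [one_div_pow, le_div_iff₀ (by positivity)]
  linarith

theorem IsOptimal.exists_H_search_le {U : Computer} (hU : IsOptimal U) (b : ℕ)
    {P : ℕ × List Bool → ℕ → Bool} {G : ℕ → ℕ × List Bool → ℕ → List Bool}
    (hP : Computable fun p : (ℕ × List Bool) × ℕ => P p.1 p.2)
    (hG : ∀ r, Computable fun p : (ℕ × List Bool) × ℕ => G r p.1 p.2) :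
    ∃ d : ℕ → ℕ, ∀ m w, w.length = b * m → (∃ k, P (m, w) k = true) →
      ∃ k, P (m, w) k = true ∧ ∀ r, H U (G r (m, w) k) ≤ (b + 1) * m + d r := by
  choose d hd using fun r => hU.exists_H_le_of_length_eq_mul b (partrec_rfind_map hP (hG r))
  refine ⟨d, fun m w hw hex => ?_⟩
  obtain ⟨k, hk, hmem⟩ := exists_mem_rfind hex
  exact ⟨k, hk, fun r => hd r m w hw _ (Part.mem_map _ hmem)⟩

/-- The test that `k ≥ n` and that the terms `2^(-ℓ i)` with `i < k` already sum up to at least the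
binary fraction with digits `w`. -/
def isLateStage (ℓ : ℕ → ℕ) (n : ℕ) (w : List Bool) (k : ℕ) : Bool :=
  decide (n ≤ k) &&
    decide ((binValue w : ℚ) ≤ (∑ i ∈ Finset.range k, (1 / 2) ^ ℓ i) * 2 ^ w.length)

theorem isLateStage_iff {n k : ℕ} {w : List Bool} :
    isLateStage ℓ n w k = true ↔ n ≤ k ∧
      (binValue w : ℝ) ≤ (∑ i ∈ Finset.range k, (1 / 2 : ℝ) ^ ℓ i) * 2 ^ w.length := by
  rw [isLateStage, Bool.and_eq_true, decide_eq_true_iff, decide_eq_true_iff,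
    ← Rat.cast_le (K := ℝ)]
  push_cast
  rfl

theorem eventually_isLateStage (hsum : Summable fun i => (1 / 2 : ℝ) ^ ℓ i) (n : ℕ)
    {w : List Bool} (hw : (binValue w : ℝ) < (∑' i, (1 / 2 : ℝ) ^ ℓ i) * 2 ^ w.length) :
    ∀ᶠ k in atTop, isLateStage ℓ n w k = true := by
  filter_upwards [(hsum.hasSum.tendsto_sum_nat.mul_const (2 ^ w.length)).eventually
    (lt_mem_nhds hw), eventually_ge_atTop n] with k hk hnk
  exact isLateStage_iff.2 ⟨hnk, hk.le⟩

theorem IsTailApprox.exists_sub_le {q ρ : ℝ} (hsum : Summable fun i => (1 / 2 : ℝ) ^ ℓ i)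
    (hq : 0 ≤ q) (hqρ : q < ρ) (hρ : ρ ≤ 1 / 2) {g : ℕ → ℚ} {k₀ : ℕ} {x : ℝ}
    (h : IsTailApprox (fun i => (ℓ i : ℝ) ^ 2 * q ^ ℓ i) k₀ g x) :
    ∃ A, ∀ k L, ∑' i, (1 / 2 : ℝ) ^ ℓ (i + (k + k₀)) ≤ (1 / 2) ^ L →
      x - g k ≤ A * ρ ^ L + (1 / 2) ^ k := by
  obtain ⟨_, _, C, hC, hCg⟩ := h
  obtain ⟨K, htail⟩ := exists_tsum_sq_mul_pow_le hsum hq hqρ hρ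
  refine ⟨C * K, fun k L hL => (hCg k).2.trans ?_⟩
  rw [mul_assoc]
  gcongr
  exact htail _ _ hL

theorem computable_isLateStage {α : Type*} [Primcodable α] (hℓ : Computable ℓ) {n k : α → ℕ}
    {w : α → List Bool} (hn : Computable n) (hw : Computable w) (hk : Computable k) :
    Computable fun a => isLateStage ℓ (n a) (w a) (k a) := by
  have hsum := computable_rat_sum_range (f := fun (_ : α) i => (1 / 2) ^ ℓ i) (by fun_prop) hk
  unfold isLateStage
  fun_prop

theorem computable_lowBits_floor_add {g : ℕ → ℚ} (hg : Computable g) {α : Type*} [Primcodable α]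
    {n k : α → ℕ} (hn : Computable n) (hk : Computable k) (r : ℕ) :
    Computable fun a => lowBits (n a) (⌊g (k a) * 2 ^ n a⌋₊ + r) :=
  computable_lowBits hn (by fun_prop)

/-- The first `L = b * m` bits of `∑ 2^(-ℓ i)` locate a stage after which this sum grows by at
most `2⁻ᴸ`; by then `g k` is within `O(ρ ^ L) = O(2⁻ⁿ)` of `x`, so that it determines the first
`n = N * m + t` bits of `x` up to boundedly many candidates. -/
theorem IsOptimal.exists_H_bits_le {U : Computer} (hU : IsOptimal U) {q ρ : ℝ} (hℓ : Computable ℓ)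
    (hsum : Summable fun i => (1 / 2 : ℝ) ^ ℓ i) (hsum1 : ∑' i, (1 / 2 : ℝ) ^ ℓ i ≤ 1)
    (hq : 0 ≤ q) (hqρ : q < ρ) (hρ : ρ ≤ 1 / 2) {b N : ℕ} (hbN : ρ ^ b = (1 / 2) ^ N)
    {g : ℕ → ℚ} (hg : Computable g) {k₀ : ℕ} {x : ℝ} (hx0 : 0 ≤ x) (hx1 : x < 1)
    (h : IsTailApprox (fun i => (ℓ i : ℝ) ^ 2 * q ^ ℓ i) k₀ g x) (t : ℕ) :
    ∃ d, ∀ m, H U (bits x (N * m + t)) ≤ (b + 1) * m + d := by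
  have hgx := h.le fun i => by positivity
  obtain ⟨A, hAg⟩ := h.exists_sub_le hsum hq hqρ hρ
  have hlate : Computable fun p : (ℕ × List Bool) × ℕ =>
      isLateStage ℓ (N * p.1.1 + t + k₀) p.1.2 (p.2 + k₀) :=
    computable_isLateStage hℓ (by fun_prop) (by fun_prop) (by fun_prop)
  have hbits (r : ℕ) : Computable fun p : (ℕ × List Bool) × ℕ =>
      lowBits (N * p.1.1 + t) (⌊g p.2 * 2 ^ (N * p.1.1 + t)⌋₊ + r) :=
    computable_lowBits_floor_add hg (by fun_prop) (by fun_prop) r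
  obtain ⟨d, hd⟩ := hU.exists_H_search_le b
    (P := fun y k => isLateStage ℓ (N * y.1 + t + k₀) y.2 (k + k₀))
    (G := fun r y k => lowBits (N * y.1 + t) (⌊g k * 2 ^ (N * y.1 + t)⌋₊ + r))
    hlate hbits
  refine ⟨∑ r ∈ Finset.range (⌈A * 2 ^ t + 1⌉₊ + 1), d r, fun m => ?_⟩
  set n := N * m + t with hn
  obtain ⟨w, hw, hwlt, hwle⟩ := exists_length_eq_binValue_lt
    (hsum.tsum_pos (fun i => by positivity) 0 (by positivity)) hsum1 (b * m)
  obtain ⟨k, hk, hH⟩ := hd m w hw ((tendsto_add_atTop_nat k₀).eventually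
    (eventually_isLateStage hsum (n + k₀) (hw ▸ hwlt))).exists
  obtain ⟨hnk, hwk⟩ := isLateStage_iff.1 hk
  have hρn : ρ ^ (b * m) = 2 ^ t * (1 / 2) ^ n := by
    rw [pow_mul, hbN, ← pow_mul, hn, pow_add, mul_left_comm, ← mul_pow]
    norm_num
  have herr : x - g k ≤ (A * 2 ^ t + 1) * (1 / 2) ^ n := by
    have hkn : (1 / 2 : ℝ) ^ k ≤ (1 / 2) ^ n :=
      pow_le_pow_of_le_one (by norm_num) (by norm_num) (Nat.add_le_add_iff_right.1 hnk)
    have hgk := hAg k _ (tsum_add_le_half_pow_of_le hsum hwle (hw ▸ hwk))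
    rw [hρn] at hgk
    linarith
  obtain ⟨r, hr, hbits⟩ := exists_bits_eq_lowBits_floor_add hx0 hx1 (hgx k) herr
  rw [hbits]
  refine (hH r).trans ?_
  gcongr
  exact Finset.single_le_sum (fun _ _ => Nat.zero_le _) (Finset.mem_range.2 hr)

theorem exists_nat_rate {T ε : ℝ} (hT0 : 0 ≤ T) (hT1 : T < 1) (hε : 0 < ε) :
    ∃ N b : ℕ, T * N < b ∧ b ≤ N ∧ b + 1 ≤ (T + ε) * N := by
  obtain ⟨N, hN⟩ := exists_nat_gt (max (2 / ε) (1 / (1 - T)))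
  obtain ⟨hNε, hNT⟩ := max_lt_iff.1 hN
  rw [div_lt_iff₀' hε] at hNε
  rw [div_lt_iff₀' (sub_pos.2 hT1)] at hNT
  have hfloor := Nat.floor_le (mul_nonneg hT0 N.cast_nonneg)
  refine ⟨N, ⌊T * N⌋₊ + 1, by exact_mod_cast Nat.lt_floor_add_one (T * N), ?_, ?_⟩
  · rw [← Nat.cast_le (α := ℝ)]
    push_cast
    linarith
  · push_cast
    linarith

theorem limsup_div_le_of_forall_le_mul_add {h : ℕ → ℝ} (h0 : ∀ n, 0 ≤ h n) {T : ℝ}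
    (hT : ∀ ε > 0, ∃ D, ∀ n, h n ≤ (T + ε) * n + D) :
    limsup (fun n => h n / n) atTop ≤ T := by
  have hcobdd : IsCoboundedUnder (· ≤ ·) atTop fun n => h n / n :=
    isCoboundedUnder_le_of_le atTop (x := 0) fun n => div_nonneg (h0 n) n.cast_nonneg
  refine le_of_forall_pos_le_add fun ε hε => ?_
  obtain ⟨D, hD⟩ := hT (ε / 2) (half_pos hε)
  refine limsup_le_of_le hcobdd ?_
  filter_upwards [(tendsto_const_div_atTop_nhds_zero_nat D).eventually
    (gt_mem_nhds (half_pos hε)), eventually_gt_atTop 0] with n hn hn0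
  have hn0' : (0 : ℝ) < n := Nat.cast_pos.2 hn0
  rw [div_lt_iff₀ hn0'] at hn
  rw [div_le_iff₀ hn0']
  linarith [hD n]

theorem exists_bitWeight_lt_pow_eq {T : ℝ} (hT : 0 < T) {N b : ℕ} (hTN : T * N < b) (hbN : b ≤ N) :
    ∃ ρ : ℝ, bitWeight T < ρ ∧ ρ ≤ 1 / 2 ∧ ρ ^ b = (1 / 2) ^ N := by
  have hb : (0 : ℝ) < b := (by positivity : 0 ≤ T * N).trans_lt hTN
  refine ⟨2 ^ (-(N : ℝ) / b), ?_, ?_, ?_⟩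
  · refine Real.rpow_lt_rpow_of_exponent_lt one_lt_two ?_
    rw [div_lt_div_iff₀ hT hb]
    linarith
  · rw [one_div, ← Real.rpow_neg_one]
    refine Real.rpow_le_rpow_of_exponent_le one_le_two ?_
    rw [div_le_iff₀ hb, neg_one_mul, neg_le_neg_iff]
    exact_mod_cast hbN
  · rw [← Real.rpow_mul_natCast zero_le_two, div_mul_cancel₀ _ hb.ne', Real.rpow_neg zero_le_two,
      Real.rpow_natCast, one_div, inv_pow]

theorem IsTailApprox.dCompressible {U : Computer} (hU : IsOptimal U) (hℓ : Computable ℓ)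
    (hsum : Summable fun i => (1 / 2 : ℝ) ^ ℓ i) (hsum1 : ∑' i, (1 / 2 : ℝ) ^ ℓ i ≤ 1)
    {T : ℝ} (hT0 : 0 < T) (hT1 : T < 1) {g : ℕ → ℚ} (hg : Computable g) {k₀ : ℕ} {x : ℝ}
    (h : IsTailApprox (fun i => (ℓ i : ℝ) ^ 2 * bitWeight T ^ ℓ i) k₀ g x) :
    DCompressible U T x := by
  refine limsup_div_le_of_forall_le_mul_add (fun n => Nat.cast_nonneg _) fun ε hε => ?_
  obtain ⟨N, b, hTN, hbN, hrate⟩ := exists_nat_rate hT0.le hT1 hε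
  obtain ⟨ρ, hqρ, hρ, hρb⟩ := exists_bitWeight_lt_pow_eq hT0 hTN hbN
  choose d hd using hU.exists_H_bits_le hℓ hsum hsum1 (bitWeight_pos T).le hqρ hρ hρb
    (g := fun k => g k - ⌊x⌋) (by fun_prop) (Int.fract_nonneg x) (Int.fract_lt_one x)
    (h.sub_intCast ⌊x⌋)
  have hN : 0 < N := Nat.pos_of_ne_zero fun hN0 => by
    rw [hN0, Nat.cast_zero, mul_zero] at hrate
    linarith [b.cast_nonneg (α := ℝ)]
  refine ⟨∑ t ∈ Finset.range N, d t, fun n => ?_⟩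
  have hn : H U (bits x n) ≤ (b + 1) * (n / N) + ∑ t ∈ Finset.range N, d t := by
    have hdn := hd (n % N) (n / N)
    rw [bits_fract, Nat.div_add_mod] at hdn
    exact hdn.trans (Nat.add_le_add_left (Finset.single_le_sum (fun _ _ => Nat.zero_le _)
      (Finset.mem_range.2 (Nat.mod_lt n hN))) _)
  have hdiv : (N : ℝ) * (n / N : ℕ) ≤ n := by exact_mod_cast Nat.mul_div_le n N
  calc (H U (bits x n) : ℝ) ≤ (b + 1) * (n / N : ℕ) + ∑ t ∈ Finset.range N, (d t : ℝ) := by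
        exact_mod_cast hn
    _ ≤ (T + ε) * N * (n / N : ℕ) + ∑ t ∈ Finset.range N, (d t : ℝ) := by gcongr
    _ ≤ (T + ε) * n + ∑ t ∈ Finset.range N, (d t : ℝ) := by
        rw [mul_assoc]
        gcongr

end Compression

section SpecificHeat

variable {ι : Type*} {ℓ : ι → ℕ} {q T : ℝ}

theorem hasDerivAt_moment (hℓ : Summable fun i => (1 / 2 : ℝ) ^ ℓ i) (hq : 0 < q)
    (hq2 : q < 1 / 2) (j : ℕ) :
    HasDerivAt (fun y => moment ℓ y j) (q⁻¹ * moment ℓ q (j + 1)) q := by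
  obtain ⟨r, hqr, hr⟩ := exists_between hq2
  have hq_mem : q ∈ Set.Ioo (q / 2) r := ⟨half_lt_self hq, hqr⟩
  rw [moment, ← tsum_mul_left]
  refine hasDerivAt_tsum_of_isPreconnected (t := Set.Ioo (q / 2) r)
    (g := fun i y => (ℓ i : ℝ) ^ j * y ^ ℓ i)
    (g' := fun i y => y⁻¹ * ((ℓ i : ℝ) ^ (j + 1) * y ^ ℓ i))
    ((summable_pow_mul_pow hℓ (hq.trans hqr).le hr (j + 1)).mul_left (q / 2)⁻¹) isOpen_Ioo
    isPreconnected_Ioo (fun i y hy => ?_) (fun i y hy => ?_) hq_mem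
    (summable_pow_mul_pow hℓ hq.le hq2 j) hq_mem
  · have hy0 : y ≠ 0 := ((half_pos hq).trans hy.1).ne'
    refine ((hasDerivAt_pow (ℓ i) y).const_mul ((ℓ i : ℝ) ^ j)).congr_deriv ?_
    rcases Nat.eq_zero_or_pos (ℓ i) with h | h
    · simp [h]
    · rw [pow_succ, ← pow_sub_one_mul h.ne' y]
      field_simp
  · have hy0 : 0 < y := (half_pos hq).trans hy.1
    rw [Real.norm_of_nonneg (by positivity)]
    gcongr
    exacts [hy.1.le, hy.2.le]

theorem hasDerivAt_moment_div_moment [Nonempty ι] (hℓ : Summable fun i => (1 / 2 : ℝ) ^ ℓ i)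
    (hq : 0 < q) (hq2 : q < 1 / 2) :
    HasDerivAt (fun y => moment ℓ y 1 / moment ℓ y 0) (q⁻¹ * momentVariance (moment ℓ q)) q := by
  have hZ := (moment_zero_pos hℓ hq hq2).ne'
  refine ((hasDerivAt_moment hℓ hq hq2 1).div (hasDerivAt_moment hℓ hq hq2 0) hZ).congr_deriv ?_
  rw [momentVariance]
  field_simp

theorem hasDerivAt_bitWeight (hT : T ≠ 0) :
    HasDerivAt bitWeight (Real.log 2 / T ^ 2 * bitWeight T) T := by
  have hexp : HasDerivAt (fun x : ℝ => -1 / x) (1 / T ^ 2) T := by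
    simpa [div_eq_mul_inv] using (hasDerivAt_inv hT).const_mul (-1)
  exact (hexp.const_rpow two_pos).congr_deriv (by rw [bitWeight]; ring)

/-- The specific heat at temperature `T` of a system whose states `i` have energies `ℓ i`, as the
rescaled variance of the energy under the Gibbs weights `2^(-ℓ i / T)`. -/
noncomputable def specificHeat (ℓ : ι → ℕ) (T : ℝ) : ℝ :=
  Real.log 2 / T ^ 2 * momentVariance (moment ℓ (bitWeight T))

theorem hasDerivAt_energy [Nonempty ι] (hℓ : Summable fun i => (1 / 2 : ℝ) ^ ℓ i) (hT0 : 0 < T)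
    (hT1 : T < 1) :
    HasDerivAt (fun x => moment ℓ (bitWeight x) 1 / moment ℓ (bitWeight x) 0)
      (specificHeat ℓ T) T := by
  have hq := bitWeight_pos T
  refine ((hasDerivAt_moment_div_moment hℓ hq (bitWeight_lt_half hT0 hT1)).comp T
    (hasDerivAt_bitWeight hT0.ne')).congr_deriv ?_
  rw [specificHeat]
  field_simp

theorem specificHeat_comp_equiv {κ : Type*} (e : κ ≃ ι) :
    specificHeat (fun i => ℓ (e i)) T = specificHeat ℓ T := by
  simp only [specificHeat, momentVariance, moment_comp_equiv]

theorem ComputableReal.computableFamily_bitWeight {α : Type*} [Primcodable α]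
    (hT : ComputableReal T) (hT0 : T ≠ 0) : ComputableFamily fun _ : α => bitWeight T := by
  simp only [bitWeight_eq_exp]
  exact (computableFamily_log_two.div hT.computableFamily fun _ => hT0).neg.exp

theorem exists_isTailApprox_specificHeat {ℓ : ℕ → ℕ} (hℓ : Computable ℓ)
    (hsum : Summable fun i => (1 / 2 : ℝ) ^ ℓ i) (hT0 : 0 < T) (hT1 : T < 1)
    (hT : ComputableReal T) :
    ∃ g k₀, Computable g ∧
      IsTailApprox (fun i => (ℓ i : ℝ) ^ 2 * bitWeight T ^ ℓ i) k₀ g (specificHeat ℓ T) := by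
  have hq := bitWeight_pos T
  have hγ : 0 < Real.log 2 / T ^ 2 := div_pos (Real.log_pos one_lt_two) (by positivity)
  have hZ : 0 < (moment ℓ (bitWeight T) 0)⁻¹ :=
    inv_pos.2 (moment_zero_pos hsum hq (bitWeight_lt_half hT0 hT1))
  obtain ⟨k₀, hk₀⟩ := eventually_atTop.1 ((eventually_momentVariance_sub_bounds hsum hq
    (bitWeight_lt_half hT0 hT1)).and (eventually_ne_atTop 0))
  have hpartial : ComputableFamily fun k =>
      Real.log 2 / T ^ 2 * momentVariance (partialMoment ℓ (bitWeight T) (k + k₀)) :=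
    (computableFamily_log_two.div (hT.computableFamily.pow (.const 2))
      fun _ => pow_ne_zero 2 hT0.ne').mul
    (computableFamily_momentVariance (fun j => computableFamily_partialMoment hℓ
      (hT.computableFamily_bitWeight hT0.ne') (by fun_prop) j)
      fun k => (partialMoment_zero_pos ℓ hq (hk₀ _ (Nat.le_add_left _ k)).2).ne')
  obtain ⟨g, hg, hgle⟩ := hpartial.exists_lower
  refine ⟨fun k => g (k, k), k₀, by fun_prop, _, mul_pos hγ (half_pos hZ), _,
    mul_pos hγ (mul_pos two_pos hZ), fun k => ?_⟩
  obtain ⟨⟨hlower, hupper⟩, -⟩ := hk₀ (k + k₀) (Nat.le_add_left _ _)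
  have hlower' := mul_le_mul_of_nonneg_left hlower hγ.le
  have hupper' := mul_le_mul_of_nonneg_left hupper hγ.le
  obtain ⟨hgk, hgk'⟩ := hgle k k
  rw [specificHeat]
  constructor <;> linarith

section Programs

variable (U : Computer) (T : ℝ)

theorem zterm_eq : zterm U T = fun p : U.domain =>
    ((p : List Bool).length : ℝ) ^ 0 * bitWeight T ^ (p : List Bool).length := by
  simp only [bitWeight_pow, pow_zero, one_mul]
  rfl

theorem wlterm_eq : wlterm U T = fun p : U.domain =>
    ((p : List Bool).length : ℝ) ^ 1 * bitWeight T ^ (p : List Bool).length := by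
  simp only [bitWeight_pow, pow_one]
  rfl

theorem wsqterm_eq : wsqterm U T = fun p : U.domain =>
    ((p : List Bool).length : ℝ) ^ 2 * bitWeight T ^ (p : List Bool).length := by
  simp only [bitWeight_pow]
  rfl

theorem tsum_zterm : ∑' p, zterm U T p =
    moment (fun p : U.domain => (p : List Bool).length) (bitWeight T) 0 := by
  rw [zterm_eq, moment]

theorem tsum_wlterm : ∑' p, wlterm U T p =
    moment (fun p : U.domain => (p : List Bool).length) (bitWeight T) 1 := by
  rw [wlterm_eq, moment]

theorem tsum_wsqterm : ∑' p, wsqterm U T p =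
    moment (fun p : U.domain => (p : List Bool).length) (bitWeight T) 2 := by
  rw [wsqterm_eq, moment]

theorem specificHeat_length :
    specificHeat (fun p : U.domain => (p : List Bool).length) T = Real.log 2 / T ^ 2 *
      ((∑' p, wsqterm U T p) / (∑' p, zterm U T p) -
        ((∑' p, wlterm U T p) / (∑' p, zterm U T p)) ^ 2) := by
  rw [specificHeat, momentVariance, tsum_zterm, tsum_wlterm, tsum_wsqterm]

end Programs

end SpecificHeat

/-- **Theorem (paper Thm 13(i)).** For computable `T` with `0 < T < 1`, the
series `Z(T)`, `W(1,T)`, `W(2,T)` converge with `Z(T) > 0`; the specific heat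
`C(T) = (ln 2 / T²)·(W(2,T)/Z(T) − (W(1,T)/Z(T))²)` is a left-computable real
which is Chaitin `T`-random and `T`-compressible; and the energy function
`x ↦ W(1,x)/Z(x)` is differentiable at `T` with derivative `C(T)`. -/
theorem specificHeat_random_compressible_hasDerivAt (U : Computer)
    (hU : IsOptimal U)
    (T : ℝ) (hT0 : 0 < T) (hT1 : T < 1) (hTc : ComputableReal T) :
    Summable (zterm U T) ∧
    Summable (wlterm U T) ∧
    Summable (wsqterm U T) ∧
    0 < ∑' p, zterm U T p ∧
    LeftComputable ((Real.log 2 / T ^ 2) *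
      ((∑' p, wsqterm U T p) / (∑' p, zterm U T p) -
        ((∑' p, wlterm U T p) / (∑' p, zterm U T p)) ^ 2)) ∧
    ChaitinRandom U T ((Real.log 2 / T ^ 2) *
      ((∑' p, wsqterm U T p) / (∑' p, zterm U T p) -
        ((∑' p, wlterm U T p) / (∑' p, zterm U T p)) ^ 2)) ∧
    DCompressible U T ((Real.log 2 / T ^ 2) *
      ((∑' p, wsqterm U T p) / (∑' p, zterm U T p) -
        ((∑' p, wlterm U T p) / (∑' p, zterm U T p)) ^ 2)) ∧
    HasDerivAt (fun x : ℝ => (∑' p, wlterm U x p) / (∑' p, zterm U x p))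
      ((Real.log 2 / T ^ 2) *
        ((∑' p, wsqterm U T p) / (∑' p, zterm U T p) -
          ((∑' p, wlterm U T p) / (∑' p, zterm U T p)) ^ 2)) T := by
  obtain ⟨e, he⟩ := hU.exists_computable_equiv
  have : Nonempty U.domain := ⟨e 0⟩
  have hdom := hU.summable_half_pow_length
  have hsum := hU.summable_half_pow_length_equiv e
  have hlen : Computable fun k => (e k : List Bool).length := by fun_prop
  obtain ⟨g, k₀, hg, happrox⟩ := exists_isTailApprox_specificHeat hlen hsum hT0 hT1 hTc
  have hterm := summable_pow_mul_pow hdom (bitWeight_pos T).le (bitWeight_lt_half hT0 hT1)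
  rw [← specificHeat_length, zterm_eq, wlterm_eq, wsqterm_eq]
  refine ⟨hterm 0, hterm 1, hterm 2, moment_zero_pos hdom (bitWeight_pos T)
    (bitWeight_lt_half hT0 hT1), ?_, ?_, ?_, ?_⟩
  · rw [← specificHeat_comp_equiv e]
    exact happrox.leftComputable (fun i => by have := bitWeight_pos T; positivity) hg
  · rw [← specificHeat_comp_equiv e]
    exact happrox.chaitinRandom hU he hT0 hT1 hg
  · rw [← specificHeat_comp_equiv e]
    exact happrox.dCompressible hU hlen hsum (hU.tsum_half_pow_length_equiv_le_one e) hT0 hT1 hg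
  · simp only [tsum_zterm, tsum_wlterm]
    exact hasDerivAt_energy hdom hT0 hT1
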